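/- Let R be a basic left Harada algebra as below, let I be the two-sided ideal I := ⊕_{i,j} rad^{n_i-j+1}(e_{ij}R), set R̄ := R/I, and let F(T) := T ⊗_R R̄. Then for every basic tilting right R-module T, F(T) is a basic tilting right R̄-module, and T ↦ F(T) induces a bijection from the set of isomorphism classes of basic tilting right R-modules onto the set of isomorphism classes of basic tilting right R̄-modules. -/

import Mathlib

/-!
Common setup.  `K` is an algebraically closed field and `R` a finite-dimensional associative
unital `K`-algebra.  Right `R`-modules are formalized as modules over the opposite ring `Rᵐᵒᵖ`
(so that `MulOpposite.op r • x = x * r`).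
-/

open MulOpposite

/-- The right ideal `xR` of a ring `R`, as a submodule of `R` over `Rᵐᵒᵖ`. -/
def rightIdeal (R : Type) [Ring R] (x : R) : Submodule Rᵐᵒᵖ R :=
  Submodule.span Rᵐᵒᵖ {x}

/-- The Jacobson radical of a submodule `N` (the intersection of the maximal submodules of the
module `N`), viewed as a submodule of the ambient module.  Iterating this operation gives the
iterated radicals `rad^k`. -/
def radSub {A M : Type} [Ring A] [AddCommGroup M] [Module A M] (N : Submodule A M) :
    Submodule A M :=
  Submodule.map N.subtype (sInf {P : Submodule A ↥N | IsCoatom P})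

/-- A module is indecomposable if it is nonzero and admits no nontrivial direct sum
decomposition. -/
def IsIndecomposableMod (A M : Type) [Ring A] [AddCommGroup M] [Module A M] : Prop :=
  Nontrivial M ∧ ∀ N N' : Submodule A M, IsCompl N N' → N = ⊥ ∨ N' = ⊥

/-- A module has projective dimension at most one iff it admits a surjection from a projective
module with projective kernel. -/
def PdLeOne (A : Type) [Ring A] (M : Type) [AddCommGroup M] [Module A M] : Prop :=
  ∃ (P : ModuleCat.{0} A) (f : ↥P →ₗ[A] M),
    Module.Projective A ↥P ∧ Function.Surjective f ∧
      Module.Projective A ↥(LinearMap.ker f)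

/-- `Ext¹_A(M,N) = 0`, expressed by the splitting of every short exact sequence
`0 → N → E → M → 0`. -/
def Ext1Zero (A : Type) [Ring A] (M N : Type) [AddCommGroup M] [Module A M]
    [AddCommGroup N] [Module A N] : Prop :=
  ∀ (E : ModuleCat.{0} A) (i : N →ₗ[A] ↥E) (p : ↥E →ₗ[A] M),
    Function.Injective i → Function.Surjective p → LinearMap.range i = LinearMap.ker p →
    ∃ s : M →ₗ[A] ↥E, p.comp s = LinearMap.id

/-- `X ∈ add T` : `X` is a direct summand of a finite direct sum of copies of `T`. -/
def InAdd (A : Type) [Ring A] (T X : Type) [AddCommGroup T] [Module A T]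
    [AddCommGroup X] [Module A X] : Prop :=
  ∃ (k : ℕ) (f : X →ₗ[A] (Fin k → T)) (g : (Fin k → T) →ₗ[A] X),
    g.comp f = LinearMap.id

/-- `T` is a (finitely generated) tilting right `R`-module: projective dimension at most one,
no self-extensions, and there is a short exact sequence `0 → R → T₀ → T₁ → 0` with
`T₀, T₁ ∈ add T`. -/
def IsTiltingRight (R : Type) [Ring R] (T : Type) [AddCommGroup T] [Module Rᵐᵒᵖ T] : Prop :=
  Module.Finite Rᵐᵒᵖ T ∧ PdLeOne Rᵐᵒᵖ T ∧ Ext1Zero Rᵐᵒᵖ T T ∧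
    ∃ (T₀ T₁ : ModuleCat.{0} Rᵐᵒᵖ) (f : R →ₗ[Rᵐᵒᵖ] ↥T₀) (g : ↥T₀ →ₗ[Rᵐᵒᵖ] ↥T₁),
      InAdd Rᵐᵒᵖ T ↥T₀ ∧ InAdd Rᵐᵒᵖ T ↥T₁ ∧
        Function.Injective f ∧ Function.Surjective g ∧ LinearMap.range f = LinearMap.ker g

/-- `T` is basic: it is an (internal) direct sum of pairwise non-isomorphic indecomposable
submodules. -/
def IsBasicMod (A : Type) [Ring A] (T : Type) [AddCommGroup T] [Module A T] : Prop :=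
  ∃ (k : ℕ) (N : Fin k → Submodule A T),
    DirectSum.IsInternal N ∧ (∀ a, IsIndecomposableMod A ↥(N a)) ∧
      ∀ a b, a ≠ b → IsEmpty (↥(N a) ≃ₗ[A] ↥(N b))

/-- The setoid identifying isomorphic modules (among those with property `P`). -/
def isoSetoid (A : Type) [Ring A] (P : ModuleCat.{0} A → Prop) :
    Setoid {M : ModuleCat.{0} A // P M} where
  r M N := Nonempty (↥M.1 ≃ₗ[A] ↥N.1)
  iseqv := ⟨fun M => ⟨LinearEquiv.refl A ↥M.1⟩, fun ⟨e⟩ => ⟨e.symm⟩,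
    fun ⟨e⟩ ⟨f⟩ => ⟨e.trans f⟩⟩

/-- The data exhibiting a ring `R` as a basic left Harada algebra:
a complete set `{e i j}` of orthogonal primitive idempotents with pairwise non-isomorphic
right ideals `(e i j)R` (`R` is basic), such that each `(e i 0)R` is an injective right
module, and `(e i j)R ≅ rad ((e i (j-1))R)` for `j ≥ 1`.  (Indices are shifted by one from
the paper: the paper's `e_{ij}` is `e i (j-1)` here.) -/
structure HaradaData (R : Type) [Ring R] : Type where
  m : ℕ
  hm : 0 < m
  n : Fin m → ℕ
  hn : ∀ i, 0 < n i
  e : (i : Fin m) → Fin (n i) → R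
  idem : ∀ i j, IsIdempotentElem (e i j)
  orth : ∀ p q : Σ i : Fin m, Fin (n i), p ≠ q → e p.1 p.2 * e q.1 q.2 = 0
  sum_eq_one : ∑ p : Σ i : Fin m, Fin (n i), e p.1 p.2 = 1
  indec : ∀ i j, IsIndecomposableMod Rᵐᵒᵖ ↥(rightIdeal R (e i j))
  basic : ∀ p q : Σ i : Fin m, Fin (n i), p ≠ q →
    IsEmpty (↥(rightIdeal R (e p.1 p.2)) ≃ₗ[Rᵐᵒᵖ] ↥(rightIdeal R (e q.1 q.2)))
  inj : ∀ i, Module.Injective Rᵐᵒᵖ ↥(rightIdeal R (e i ⟨0, hn i⟩))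
  rad_iso : ∀ (i : Fin m) (j : Fin (n i)), 0 < j.val →
    Nonempty (↥(rightIdeal R (e i j)) ≃ₗ[Rᵐᵒᵖ]
      ↥(radSub (rightIdeal R (e i ⟨j.val - 1, Nat.lt_of_le_of_lt (Nat.sub_le j.val 1) j.isLt⟩))))

variable {R : Type} [Ring R]

/-- `H.P i j = rad^j ((e i 0)R)`; this is the paper's `P_{i,j+1} = rad^j (e_{i1}R)`,
a submodule of `R`. -/
def HaradaData.P (H : HaradaData R) (i : Fin H.m) (j : Fin (H.n i)) : Submodule Rᵐᵒᵖ R :=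
  radSub^[j.val] (rightIdeal R (H.e i ⟨0, H.hn i⟩))

/-- The quotient module `P_{ik}/P_{il}` (for `l ≥ k` we have `H.P i l ≤ H.P i k`). -/
abbrev HaradaData.Quot (H : HaradaData R) (i : Fin H.m) (k l : Fin (H.n i)) : Type :=
  ↥(H.P i k) ⧸ Submodule.comap (H.P i k).subtype (H.P i l)

/-- The last index (the paper's `n_i`) in `Fin (H.n i)`. -/
def HaradaData.last (H : HaradaData R) (i : Fin H.m) : Fin (H.n i) :=
  ⟨H.n i - 1, Nat.sub_lt (H.hn i) one_pos⟩

/-- The right ideal `I = ⊕_{i,j} rad^{n_i - j + 1}(e_{ij}R)` of the paper. -/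
def HaradaData.I (H : HaradaData R) : Submodule Rᵐᵒᵖ R :=
  ⨆ p : Σ i : Fin H.m, Fin (H.n i),
    radSub^[H.n p.1 - p.2.val] (rightIdeal R (H.e p.1 p.2))

/-- The submodule `T·I` of a right module `T`, for `I` a right ideal of `R`. -/
def smulSub (I : Submodule Rᵐᵒᵖ R) (T : Type) [AddCommGroup T] [Module Rᵐᵒᵖ T] :
    Submodule Rᵐᵒᵖ T :=
  Submodule.span Rᵐᵒᵖ {x : T | ∃ (t : T) (r : R), r ∈ I ∧ x = op r • t}

/-- Restriction of scalars along `π : R →+* S`, turning a right `S`-module into a right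
`R`-module (type synonym). -/
@[nolint unusedArguments]
def RestrictRight {R S : Type} [Ring R] [Ring S] (_ : R →+* S) (N : Type) [AddCommGroup N]
    [Module Sᵐᵒᵖ N] : Type := N

instance {R S : Type} [Ring R] [Ring S] (π : R →+* S) (N : Type) [AddCommGroup N]
    [Module Sᵐᵒᵖ N] : AddCommGroup (RestrictRight π N) := inferInstanceAs (AddCommGroup N)

instance {R S : Type} [Ring R] [Ring S] (π : R →+* S) (N : Type) [AddCommGroup N]
    [Module Sᵐᵒᵖ N] : Module Rᵐᵒᵖ (RestrictRight π N) := Module.compHom N (RingHom.op π)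

/-!
The modules `e_{i1}R` are injective and `rad^{j-1}(e_{i1}R) ≅ e_{ij}R` is projective for `j ≤
n_i`, so a nonzero map `e_{i1}R → e_{k1}R` whose image is one of the first `n_k` radicals splits:
every map is either injective or has image in `rad^{n_k}(e_{k1}R) = (e_{k1}R)I`. Embedding free
modules in sums of the `e_{i1}R`, one deduces that a matrix over `R` is injective if and only if
its reduction modulo `I` is, and that a matrix with entries in `I` extends along every injective
matrix to a matrix with entries in `I`. Hence projective resolutions of length one can be reduced
and lifted: `X ↦ X/XI` is bijective on isomorphism classes of modules of projective dimension at
most one, homomorphisms between such modules lift, and vanishing of `Ext¹`, membership in `add T`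
and indecomposability are preserved and reflected.

Reduction along `R → R̄` is encoded by surjective semilinear maps `X → Z` with kernel `XI`, so
that `Z` is a model of `X ⊗ R̄`.
-/

section Semilinear

variable {A B C : Type*} [Ring A] [Ring B] [Ring C]
  {σ : A →+* C} {τ : C →+* B} {q : A →+* B} [RingHomCompTriple σ τ q]
  {X M Z : Type*} [AddCommGroup X] [Module A X] [AddCommGroup M] [Module C M]
  [AddCommGroup Z] [Module B Z]

theorem exists_factor_of_surjective [RingHomSurjective σ] (p : X →ₛₗ[σ] M)
    (hp : Function.Surjective p) (g : X →ₛₗ[q] Z) (hpg : ∀ x, p x = 0 → g x = 0) :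
    ∃ k : M →ₛₗ[τ] Z, ∀ x, k (p x) = g x := by
  have hwell : ∀ x y, p x = p y → g x = g y := fun x y hxy => by
    simpa [sub_eq_zero] using hpg (x - y) (by simp [hxy])
  choose r hr using hp
  refine ⟨{ toFun := fun m => g (r m), map_add' := fun m m' => ?_, map_smul' := fun c m => ?_ },
    fun x => hwell _ _ (by simp [hr])⟩
  · rw [← map_add]
    exact hwell _ _ (by simp [hr])
  · obtain ⟨a, rfl⟩ := RingHomSurjective.is_surjective (σ := σ) c
    rw [RingHomCompTriple.comp_apply, ← map_smulₛₗ]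
    exact hwell _ _ (by simp [hr])

theorem exists_lift_of_projective [Module.Projective A X] (f : M →ₛₗ[τ] Z)
    (hf : Function.Surjective f) (g : X →ₛₗ[q] Z) : ∃ l : X →ₛₗ[σ] M, ∀ x, f (l x) = g x := by
  let : Module A M := Module.compHom M σ
  let : Module A Z := Module.compHom Z q
  let f' : M →ₗ[A] Z :=
    { toFun := f
      map_add' := map_add f
      map_smul' := fun a x => by
        change f (σ a • x) = q a • f x
        rw [map_smulₛₗ, RingHomCompTriple.comp_apply] }
  let g' : X →ₗ[A] Z := { toFun := g, map_add' := map_add g, map_smul' := map_smulₛₗ g }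
  obtain ⟨l, hl⟩ := Module.projective_lifting_property f' g' hf
  exact ⟨{ toFun := l, map_add' := map_add l, map_smul' := map_smul l }, LinearMap.congr_fun hl⟩

end Semilinear

section Linear

variable {A : Type*} [Ring A] {M N X : Type*} [AddCommGroup M] [Module A M]
  [AddCommGroup N] [Module A N] [AddCommGroup X] [Module A X]

theorem exists_factor_of_injective (i : M →ₗ[A] N) (hi : Function.Injective i) (g : X →ₗ[A] N)
    (hg : ∀ x, g x ∈ LinearMap.range i) : ∃ k : X →ₗ[A] M, ∀ x, i (k x) = g x :=
  ⟨(LinearEquiv.ofInjective i hi).symm.toLinearMap ∘ₗ g.codRestrict _ hg, fun x =>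
    congrArg Subtype.val ((LinearEquiv.ofInjective i hi).apply_symm_apply ⟨g x, hg x⟩)⟩

theorem projective_pi {ι : Type*} [Finite ι] {V : ι → Type*} [∀ i, AddCommGroup (V i)]
    [∀ i, Module A (V i)] [∀ i, Module.Projective A (V i)] : Module.Projective A (∀ i, V i) := by
  classical
  cases nonempty_fintype ι
  exact Module.Projective.of_equiv' (DFinsupp.linearEquivFunOnFintype (R := A) (M := V))

end Linear

/-! ### Reduction of modules along a surjective ring homomorphism -/

section KerSMul

variable {A B : Type*} [Ring A] [Ring B] {q : A →+* B}
  {M N X : Type*} [AddCommGroup M] [Module A M] [AddCommGroup N] [Module A N]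
  [AddCommGroup X] [Module A X] {Z : Type*} [AddCommGroup Z] [Module B Z]

/-- The submodule `I M` of an `A`-module `M`, where `I` is the kernel of `q : A → B`. -/
def kerSMul (q : A →+* B) (M : Type*) [AddCommGroup M] [Module A M] : Submodule A M :=
  RingHom.ker q • (⊤ : Submodule A M)

theorem smul_mem_kerSMul {a : A} (ha : q a = 0) (m : M) : a • m ∈ kerSMul q M :=
  Submodule.smul_mem_smul (RingHom.mem_ker.2 ha) Submodule.mem_top

theorem kerSMul_le {P : Submodule A M} (h : ∀ (a : A) (m : M), q a = 0 → a • m ∈ P) :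
    kerSMul q M ≤ P :=
  Submodule.smul_le.2 fun a ha m _ => h a m (RingHom.mem_ker.1 ha)

theorem map_mem_kerSMul (f : M →ₗ[A] N) {x : M} (hx : x ∈ kerSMul q M) : f x ∈ kerSMul q N := by
  have h : (kerSMul q M).map f ≤ kerSMul q N := by
    rw [kerSMul, Submodule.map_smul'']
    exact Submodule.smul_mono le_rfl le_top
  exact h ⟨x, hx, rfl⟩

theorem exists_mem_kerSMul_of_surjective (f : M →ₗ[A] N) (hf : Function.Surjective f) {y : N}
    (hy : y ∈ kerSMul q N) : ∃ x ∈ kerSMul q M, f x = y := by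
  rwa [← Submodule.mem_map, kerSMul, Submodule.map_smul'', Submodule.map_top,
    LinearMap.range_eq_top.2 hf]

theorem map_eq_zero_of_mem_kerSMul (p : M →ₛₗ[q] Z) {x : M} (hx : x ∈ kerSMul q M) : p x = 0 :=
  (kerSMul_le fun a m ha => by simp [ha] : kerSMul q M ≤ LinearMap.ker p) hx

theorem mem_kerSMul_pi {ι : Type*} [Finite ι] {V : ι → Type*} [∀ i, AddCommGroup (V i)]
    [∀ i, Module A (V i)] {x : ∀ i, V i} (hx : ∀ i, x i ∈ kerSMul q (V i)) :
    x ∈ kerSMul q (∀ i, V i) := by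
  classical
  cases nonempty_fintype ι
  rw [← Finset.univ_sum_single x]
  exact Submodule.sum_mem _ fun i _ => map_mem_kerSMul (LinearMap.single A V i) (hx i)

theorem mem_kerSMul_prod {x : M × N} (h₁ : x.1 ∈ kerSMul q M) (h₂ : x.2 ∈ kerSMul q N) :
    x ∈ kerSMul q (M × N) := by
  rw [← Prod.fst_add_snd x]
  exact add_mem (map_mem_kerSMul (LinearMap.inl A M N) h₁)
    (map_mem_kerSMul (LinearMap.inr A M N) h₂)

theorem exists_lift_mem_kerSMul [Module.Projective A X] (f : M →ₗ[A] N)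
    (hf : Function.Surjective f) (g : X →ₗ[A] N) (hg : ∀ x, g x ∈ kerSMul q N) :
    ∃ l : X →ₗ[A] M, (∀ x, f (l x) = g x) ∧ ∀ x, l x ∈ kerSMul q M := by
  let f' : kerSMul q M →ₗ[A] kerSMul q N := f.restrict fun x hx => map_mem_kerSMul f hx
  have hf' : Function.Surjective f' := by
    rintro ⟨y, hy⟩
    obtain ⟨x, hx, rfl⟩ := exists_mem_kerSMul_of_surjective f hf hy
    exact ⟨⟨x, hx⟩, rfl⟩
  obtain ⟨l, hl⟩ := exists_lift_of_projective (σ := RingHom.id A) f' hf' (g.codRestrict _ hg)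
  exact ⟨(kerSMul q M).subtype ∘ₗ l, fun x => congrArg Subtype.val (hl x), fun x => (l x).2⟩

end KerSMul

section Reduction

variable {A B : Type*} [Ring A] [Ring B] {q : A →+* B}
  {M N X : Type*} [AddCommGroup M] [Module A M] [AddCommGroup N] [Module A N]
  [AddCommGroup X] [Module A X]
  {Z Z' L : Type*} [AddCommGroup Z] [Module B Z] [AddCommGroup Z'] [Module B Z']
  [AddCommGroup L] [Module B L]

/-- `p : M → Z` exhibits the `B`-module `Z` as the reduction `M / I M`, where `I` is the kernel of
`q : A → B`. Working with this property rather than with a chosen quotient makes the `B`-module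
structure part of the data and the notion invariant under isomorphism. -/
structure IsReduction (p : M →ₛₗ[q] Z) : Prop where
  surjective : Function.Surjective p
  ker_le : ∀ x, p x = 0 → x ∈ kerSMul q M

/-- The product of a family of semilinear maps. -/
def semilinearPi {ι : Type*} {V W : ι → Type*} [∀ i, AddCommGroup (V i)]
    [∀ i, Module A (V i)] [∀ i, AddCommGroup (W i)] [∀ i, Module B (W i)]
    (p : ∀ i, V i →ₛₗ[q] W i) : (∀ i, V i) →ₛₗ[q] (∀ i, W i) where
  toFun x i := p i (x i)
  map_add' x y := by ext; simp
  map_smul' a x := by ext; simp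

theorem IsReduction.pi {ι : Type*} [Finite ι] {V W : ι → Type*} [∀ i, AddCommGroup (V i)]
    [∀ i, Module A (V i)] [∀ i, AddCommGroup (W i)] [∀ i, Module B (W i)]
    {p : ∀ i, V i →ₛₗ[q] W i} (hp : ∀ i, IsReduction (p i)) : IsReduction (semilinearPi p) := by
  refine ⟨fun z => ?_, fun x hx => mem_kerSMul_pi fun i => (hp i).ker_le _ (congrFun hx i)⟩
  choose x hx using fun i => (hp i).surjective (z i)
  exact ⟨x, funext hx⟩

theorem IsReduction.equiv_comp {p : M →ₛₗ[q] Z} (hp : IsReduction p) (e : Z ≃ₗ[B] Z') :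
    IsReduction (e.toLinearMap.comp p) :=
  ⟨e.surjective.comp hp.surjective, fun x hx => hp.ker_le x (by simpa using hx)⟩

theorem IsReduction.finite [Module.Finite A X] {p : X →ₛₗ[q] Z} (hp : IsReduction p) :
    Module.Finite B Z :=
  Module.Finite.of_surjective p hp.surjective

variable [RingHomSurjective q]

theorem isReduction_toSemilinearMap : IsReduction q.toSemilinearMap :=
  ⟨q.surjective, fun x hx => by simpa using smul_mem_kerSMul (q := q) (a := x) hx (1 : A)⟩

theorem isReduction_free {ι : Type*} [Finite ι] :
    IsReduction (semilinearPi fun _ : ι => q.toSemilinearMap) :=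
  .pi fun _ => isReduction_toSemilinearMap

theorem IsReduction.exists_desc {p : M →ₛₗ[q] Z} (hp : IsReduction p) (g : M →ₛₗ[q] L) :
    ∃ k : Z →ₗ[B] L, ∀ x, k (p x) = g x :=
  exists_factor_of_surjective p hp.surjective g fun x hx =>
    map_eq_zero_of_mem_kerSMul g (hp.ker_le x hx)

theorem IsReduction.exists_map {p : M →ₛₗ[q] Z} (hp : IsReduction p) (p' : N →ₛₗ[q] Z')
    (f : M →ₗ[A] N) : ∃ k : Z →ₗ[B] Z', ∀ x, k (p x) = p' (f x) :=
  hp.exists_desc (p'.comp f)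

theorem IsReduction.nonempty_equiv {p : M →ₛₗ[q] Z} {p' : N →ₛₗ[q] Z'} (hp : IsReduction p)
    (hp' : IsReduction p') (e : M ≃ₗ[A] N) : Nonempty (Z ≃ₗ[B] Z') := by
  obtain ⟨k, hk⟩ := hp.exists_map p' e.toLinearMap
  obtain ⟨l, hl⟩ := hp'.exists_map p e.symm.toLinearMap
  refine ⟨LinearEquiv.ofLinearMap k l ?_ ?_⟩
  · ext z
    obtain ⟨x, rfl⟩ := hp'.surjective z
    simp [hl, hk]
  · ext z
    obtain ⟨x, rfl⟩ := hp.surjective z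
    simp [hl, hk]

theorem IsReduction.projective [Module.Projective A X] {p : X →ₛₗ[q] Z} (hp : IsReduction p) :
    Module.Projective B Z := by
  refine Module.Projective.of_lifting_property'' fun f hf => ?_
  obtain ⟨l, hl⟩ := exists_lift_of_projective (σ := q) f hf p
  obtain ⟨k, hk⟩ := hp.exists_desc l
  refine ⟨k, ?_⟩
  ext z
  obtain ⟨x, rfl⟩ := hp.surjective z
  simp [hk, hl]

end Reduction

theorem exists_isReduction.{u} {A B : Type*} [Ring A] [Ring B] (q : A →+* B)
    [RingHomSurjective q] (M : Type u) [AddCommGroup M] [Module A M] :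
    ∃ (Z : ModuleCat.{u} B) (p : M →ₛₗ[q] Z), IsReduction p := by
  let Q := M ⧸ kerSMul q M
  have smul_eq_zero : ∀ (a : A) (x : Q), q a = 0 → a • x = 0 := by
    intro a x ha
    obtain ⟨m, rfl⟩ := Submodule.Quotient.mk_surjective _ x
    rw [← Submodule.Quotient.mk_smul, Submodule.Quotient.mk_eq_zero]
    exact smul_mem_kerSMul ha m
  let : SMul B Q := ⟨fun b x => (q.surjective b).choose • x⟩
  have map_smul_eq : ∀ (a : A) (x : Q), q a • x = a • x := by
    intro a x
    rw [← sub_eq_zero]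
    change (q.surjective (q a)).choose • x - a • x = 0
    rw [← sub_smul]
    exact smul_eq_zero _ _ (by rw [map_sub, (q.surjective (q a)).choose_spec, sub_self])
  let : Module B Q := Function.Surjective.moduleLeft q q.surjective map_smul_eq
  refine ⟨ModuleCat.of B Q,
    { toFun := (kerSMul q M).mkQ
      map_add' := map_add _
      map_smul' := fun a x => (map_smul _ a x).trans (map_smul_eq a _).symm },
    (kerSMul q M).mkQ_surjective, fun x hx => (Submodule.Quotient.mk_eq_zero _).1 hx⟩

/-! ### Projective dimension at most one, vanishing of `Ext¹`, and `add T` -/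

section HomologicalAlgebra

variable {A : Type} [Ring A] {M X Y P : Type} [AddCommGroup M] [Module A M]
  [AddCommGroup X] [Module A X] [AddCommGroup Y] [Module A Y] [AddCommGroup P] [Module A P]

theorem PdLeOne.of_surjective [Module.Projective A P] (g : P →ₗ[A] X) (hg : Function.Surjective g)
    (hker : Module.Projective A (LinearMap.ker g)) : PdLeOne A X :=
  ⟨ModuleCat.of A P, g, ‹_›, hg, hker⟩

/- Schanuel's lemma: `ker g` is a direct summand of `ker f × P`. -/
theorem PdLeOne.projective_ker (h : PdLeOne A X) [Module.Projective A P] (g : P →ₗ[A] X)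
    (hg : Function.Surjective g) : Module.Projective A (LinearMap.ker g) := by
  obtain ⟨P', f, _, hf, _⟩ := h
  obtain ⟨a, ha⟩ := exists_lift_of_projective (σ := RingHom.id A) f hf g
  obtain ⟨b, hb⟩ := exists_lift_of_projective (σ := RingHom.id A) g hg f
  let i : LinearMap.ker g →ₗ[A] (LinearMap.ker f × P) :=
    (a.restrict (q := LinearMap.ker f) fun x hx => by simpa [ha] using hx).prod
      (LinearMap.ker g).subtype
  let s : (LinearMap.ker f × P) →ₗ[A] LinearMap.ker g :=
    (b.restrict (q := LinearMap.ker g) fun x hx => by simpa [hb] using hx).coprod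
      ((LinearMap.id - b ∘ₗ a).codRestrict _ fun x => by simp [ha, hb])
  refine .of_split i s ?_
  ext x
  simp [i, s]

theorem PdLeOne.of_retract (h : PdLeOne A M) (s : X →ₗ[A] M) (r : M →ₗ[A] X)
    (hrs : Function.LeftInverse r s) : PdLeOne A X := by
  let g₁ : (X →₀ A) →ₗ[A] X := Finsupp.linearCombination A id
  let g₂ : (LinearMap.ker r →₀ A) →ₗ[A] LinearMap.ker r := Finsupp.linearCombination A id
  let g : ((X →₀ A) × (LinearMap.ker r →₀ A)) →ₗ[A] M :=
    (s ∘ₗ g₁).coprod ((LinearMap.ker r).subtype ∘ₗ g₂)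
  have hg₁ : Function.Surjective g₁ := Finsupp.linearCombination_id_surjective A X
  have hg : Function.Surjective g := by
    intro m
    obtain ⟨a, ha⟩ := hg₁ (r m)
    obtain ⟨b, hb⟩ := Finsupp.linearCombination_id_surjective A _
      (⟨m - s (r m), by simp [hrs (r m)]⟩ : LinearMap.ker r)
    exact ⟨(a, b), by simp [g, g₂, ha, hb]⟩
  have hrg : ∀ x, r (g x) = g₁ x.1 := fun x => by simp [g, hrs (g₁ x.1)]
  have := h.projective_ker g hg
  refine .of_surjective g₁ hg₁ (.of_split
    ((LinearMap.inl A _ _).restrict (q := LinearMap.ker g) fun x hx => ?_)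
    ((LinearMap.fst A _ _).restrict (p := LinearMap.ker g) fun x hx => ?_) ?_)
  · simp [g, LinearMap.mem_ker.1 hx]
  · rw [LinearMap.mem_ker, LinearMap.fst_apply, ← hrg, LinearMap.mem_ker.1 hx, map_zero]
  · rfl

theorem PdLeOne.pi {ι : Type} [Finite ι] {V : ι → Type} [∀ i, AddCommGroup (V i)]
    [∀ i, Module A (V i)] (h : ∀ i, PdLeOne A (V i)) : PdLeOne A (∀ i, V i) := by
  choose P f _ hf _ using h
  let g : (∀ i, P i) →ₗ[A] (∀ i, V i) := .piMap f
  have : Module.Projective A (∀ i, P i) := projective_pi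
  have : Module.Projective A (∀ i, LinearMap.ker (f i)) := projective_pi
  refine .of_surjective g (Function.Surjective.piMap hf) (.of_split
    (LinearMap.pi fun i => (LinearMap.proj i).restrict (p := LinearMap.ker g)
      (q := LinearMap.ker (f i)) fun x hx => congrFun hx i)
    ((LinearMap.piMap fun i => (LinearMap.ker (f i)).subtype).codRestrict (LinearMap.ker g)
      fun x => funext fun i => (x i).2) ?_)
  rfl

theorem InAdd.pdLeOne (hX : InAdd A M X) (h : PdLeOne A M) : PdLeOne A X := by
  obtain ⟨k, f, g, hgf⟩ := hX
  exact (PdLeOne.pi fun _ => h).of_retract f g (LinearMap.congr_fun hgf)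

theorem InAdd.finite [Module.Finite A M] (hX : InAdd A M X) : Module.Finite A X := by
  obtain ⟨k, f, g, hgf⟩ := hX
  exact .of_surjective g fun x => ⟨f x, LinearMap.congr_fun hgf x⟩

theorem InAdd.of_retract (h : InAdd A M Y) (s : X →ₗ[A] Y) (r : Y →ₗ[A] X)
    (hrs : Function.LeftInverse r s) : InAdd A M X := by
  obtain ⟨k, f, g, hgf⟩ := h
  refine ⟨k, f ∘ₗ s, r ∘ₗ g, ?_⟩
  ext x
  exact (congrArg r (LinearMap.congr_fun hgf (s x))).trans (hrs x)

theorem InAdd.pow (k : ℕ) : InAdd A M (Fin k → M) :=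
  ⟨k, LinearMap.id, LinearMap.id, rfl⟩

theorem InAdd.prod (hX : InAdd A M X) (hY : InAdd A M Y) : InAdd A M (X × Y) := by
  obtain ⟨k, f, g, hgf⟩ := hX
  obtain ⟨l, f', g', hgf'⟩ := hY
  let e : (Fin (k + l) → M) ≃ₗ[A] (Fin k → M) × (Fin l → M) :=
    (LinearEquiv.funCongrLeft A M finSumFinEquiv).trans
      (LinearEquiv.sumArrowLequivProdArrow (Fin k) (Fin l) A M)
  refine ⟨k + l, e.symm.toLinearMap ∘ₗ f.prodMap f', g.prodMap g' ∘ₗ e.toLinearMap, ?_⟩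
  refine LinearMap.ext fun x => ?_
  simpa using Prod.ext (LinearMap.congr_fun hgf x.1) (LinearMap.congr_fun hgf' x.2)

theorem exists_pushout_extension (g : P →ₗ[A] X) (hg : Function.Surjective g)
    (θ : LinearMap.ker g →ₗ[A] Y) :
    ∃ (E : ModuleCat.{0} A) (i : Y →ₗ[A] E) (p : E →ₗ[A] X) (j : P →ₗ[A] E),
      Function.Injective i ∧ Function.Surjective p ∧ LinearMap.range i = LinearMap.ker p ∧
        (∀ x, p (j x) = g x) ∧ ∀ x : LinearMap.ker g, j x = i (θ x) := by
  let D : Submodule A (Y × P) := LinearMap.range (θ.prod (-(LinearMap.ker g).subtype))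
  let i : Y →ₗ[A] ((Y × P) ⧸ D) := D.mkQ ∘ₗ LinearMap.inl A Y P
  let j : P →ₗ[A] ((Y × P) ⧸ D) := D.mkQ ∘ₗ LinearMap.inr A Y P
  let p : ((Y × P) ⧸ D) →ₗ[A] X := D.liftQ (g ∘ₗ LinearMap.snd A Y P) <| by
    rintro _ ⟨x, rfl⟩
    simp
  have hpj : ∀ x, p (j x) = g x := fun x => by simp [p, j]
  have hji : ∀ x : LinearMap.ker g, j x = i (θ x) := fun x => by
    refine (Submodule.Quotient.eq D).2 ⟨-x, ?_⟩
    simp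
  refine ⟨ModuleCat.of A ((Y × P) ⧸ D), i, p, j, ?_, ?_, le_antisymm ?_ ?_, hpj, hji⟩
  · refine (injective_iff_map_eq_zero i).2 fun y hy => ?_
    obtain ⟨x, hx⟩ : (y, (0 : P)) ∈ D := (Submodule.Quotient.mk_eq_zero _).1 hy
    obtain ⟨hθ, hx⟩ := Prod.ext_iff.1 hx
    have hx₀ : x = 0 := Subtype.ext (neg_eq_zero.1 hx)
    rw [← show θ x = y from hθ, hx₀, map_zero]
  · exact Function.Surjective.of_comp (g := j) (by simpa [Function.comp_def, hpj] using hg)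
  · rintro _ ⟨y, rfl⟩
    simp [p, i]
  · intro z hz
    obtain ⟨⟨y, x⟩, rfl⟩ := D.mkQ_surjective z
    have hx : g x = 0 := by simpa [p] using hz
    refine ⟨y + θ ⟨x, hx⟩, ?_⟩
    rw [map_add, ← hji ⟨x, hx⟩]
    change D.mkQ (y, 0) + D.mkQ (0, x) = D.mkQ (y, x)
    rw [← map_add, Prod.mk_add_mk, add_zero, zero_add]

theorem Ext1Zero.exists_extension (h : Ext1Zero A X Y) (g : P →ₗ[A] X)
    (hg : Function.Surjective g) (θ : LinearMap.ker g →ₗ[A] Y) :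
    ∃ θ' : P →ₗ[A] Y, ∀ x : LinearMap.ker g, θ' x = θ x := by
  obtain ⟨E, i, p, j, hi, hp, hex, hpj, hji⟩ := exists_pushout_extension g hg θ
  obtain ⟨s, hs⟩ := h E i p hi hp hex
  have hps : ∀ x, p (s x) = x := LinearMap.congr_fun hs
  obtain ⟨θ', hθ'⟩ := exists_factor_of_injective i hi (j - s ∘ₗ g) fun x => by
    simp [hex, hpj, hps]
  refine ⟨θ', fun x => hi ?_⟩
  simp [hθ', hji, LinearMap.mem_ker.1 x.2]

theorem Ext1Zero.of_exists_extension [Module.Projective A P] (g : P →ₗ[A] X)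
    (hg : Function.Surjective g)
    (h : ∀ θ : LinearMap.ker g →ₗ[A] Y, ∃ θ' : P →ₗ[A] Y, ∀ x : LinearMap.ker g, θ' x = θ x) :
    Ext1Zero A X Y := by
  intro E i p hi hp hex
  have hpi : ∀ y, p (i y) = 0 := fun y => LinearMap.mem_ker.1 (hex ▸ ⟨y, rfl⟩)
  obtain ⟨l, hl⟩ := exists_lift_of_projective (σ := RingHom.id A) p hp g
  obtain ⟨θ, hθ⟩ := exists_factor_of_injective i hi (l ∘ₗ (LinearMap.ker g).subtype) fun x => by
    simp [hex, hl]
  obtain ⟨θ', hθ'⟩ := h θ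
  obtain ⟨s, hs⟩ := exists_factor_of_surjective (τ := RingHom.id A) g hg (l - i ∘ₗ θ')
    fun x hx => by simp [hθ' ⟨x, hx⟩, hθ]
  refine ⟨s, ?_⟩
  ext x
  obtain ⟨y, rfl⟩ := hg x
  simp [hs, hl, hpi]

end HomologicalAlgebra

theorem PdLeOne.exists_presentation {A X : Type} [Ring A] [AddCommGroup X] [Module A X]
    [Module.Finite A X] (h : PdLeOne A X) : ∃ (k : ℕ) (g : (Fin k → A) →ₗ[A] X),
      Function.Surjective g ∧ Module.Projective A (LinearMap.ker g) := by
  obtain ⟨k, g, hg⟩ := Module.Finite.exists_fin' A X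
  exact ⟨k, g, hg, h.projective_ker g hg⟩

theorem exists_retract_of_free (A P : Type*) [Ring A] [AddCommGroup P] [Module A P]
    [Module.Finite A P] [Module.Projective A P] :
    ∃ (k : ℕ) (s : P →ₗ[A] (Fin k → A)) (r : (Fin k → A) →ₗ[A] P), Function.LeftInverse r s := by
  obtain ⟨k, r, hr⟩ := Module.Finite.exists_fin' A P
  obtain ⟨s, hs⟩ := exists_lift_of_projective (σ := RingHom.id A) r hr LinearMap.id
  exact ⟨k, s, r, hs⟩

section FreeStabilization

variable {A : Type*} [Ring A] {P Q : Type*} [AddCommGroup P] [Module A P] [AddCommGroup Q]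
  [Module A Q]

/-- A map `map` of finitely generated free modules having `φ : P → Q` as a direct summand, with a
split monomorphism as complementary summand. It transfers statements about maps of free modules to
maps of finitely generated projective modules. -/
structure FreeStabilization (φ : P →ₗ[A] Q) where
  m : ℕ
  n : ℕ
  map : (Fin m → A) →ₗ[A] (Fin n ⊕ Fin m → A)
  inclSource : P →ₗ[A] (Fin m → A)
  projSource : (Fin m → A) →ₗ[A] P
  inclTarget : Q →ₗ[A] (Fin n ⊕ Fin m → A)
  projTarget : (Fin n ⊕ Fin m → A) →ₗ[A] Q
  /-- Recovers the complementary component of `x` from `map x`. -/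
  complement : (Fin n ⊕ Fin m → A) →ₗ[A] (Fin m → A)
  projSource_inclSource : Function.LeftInverse projSource inclSource
  map_inclSource : ∀ x, map (inclSource x) = inclTarget (φ x)
  projTarget_map : ∀ x, projTarget (map x) = φ (projSource x)
  complement_map : ∀ x, complement (map x) = x - inclSource (projSource x)

theorem nonempty_freeStabilization (φ : P →ₗ[A] Q) [Module.Finite A P] [Module.Projective A P]
    [Module.Finite A Q] [Module.Projective A Q] : Nonempty (FreeStabilization φ) := by
  obtain ⟨m, s, r, hrs⟩ := exists_retract_of_free A P
  obtain ⟨n, s', r', hrs'⟩ := exists_retract_of_free A Q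
  let e := LinearEquiv.sumArrowLequivProdArrow (Fin n) (Fin m) A A
  let ψ : (Fin m → A) →ₗ[A] (Fin n → A) × (Fin m → A) :=
    (s' ∘ₗ φ ∘ₗ r).prod (LinearMap.id - s ∘ₗ r)
  exact ⟨{
    m, n
    map := e.symm.toLinearMap ∘ₗ ψ
    inclSource := s
    projSource := r
    inclTarget := e.symm.toLinearMap ∘ₗ LinearMap.inl A _ _ ∘ₗ s'
    projTarget := (r' ∘ₗ LinearMap.fst A _ _) ∘ₗ e.toLinearMap
    complement := LinearMap.snd A _ _ ∘ₗ e.toLinearMap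
    projSource_inclSource := hrs
    map_inclSource := fun x => congrArg e.symm (by simp [ψ, hrs x])
    projTarget_map := fun x => by
      change r' (e (e.symm (ψ x))).1 = _
      rw [e.apply_symm_apply]
      exact hrs' _
    complement_map := fun x => congrArg Prod.snd (e.apply_symm_apply (ψ x)) }⟩

namespace FreeStabilization

variable {φ : P →ₗ[A] Q} (S : FreeStabilization φ)

theorem injective_map_iff : Function.Injective S.map ↔ Function.Injective φ := by
  simp only [injective_iff_map_eq_zero]
  constructor
  · intro h x hx
    rw [← S.projSource_inclSource x, h (S.inclSource x) (by rw [S.map_inclSource, hx, map_zero]),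
      map_zero]
  · intro h x hx
    have hproj : S.projSource x = 0 := h _ (by rw [← S.projTarget_map, hx, map_zero])
    simpa [hx, hproj] using (S.complement_map x).symm

theorem kerSMul_map_iff {B : Type*} [Ring B] {q : A →+* B} :
    (∀ x, S.map x ∈ kerSMul q _ → x ∈ kerSMul q _) ↔ ∀ x, φ x ∈ kerSMul q Q → x ∈ kerSMul q P := by
  constructor
  · intro h x hx
    rw [← S.projSource_inclSource x]
    refine map_mem_kerSMul _ (h _ ?_)
    rw [S.map_inclSource]
    exact map_mem_kerSMul _ hx
  · intro h x hx
    have hproj : S.projSource x ∈ kerSMul q P :=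
      h _ (S.projTarget_map x ▸ map_mem_kerSMul S.projTarget hx)
    have hcompl := map_mem_kerSMul S.complement hx
    rw [S.complement_map] at hcompl
    simpa using add_mem hcompl (map_mem_kerSMul S.inclSource hproj)

end FreeStabilization

end FreeStabilization

/-! ### Lifting modules of projective dimension at most one -/

/-- The conditions on a ring homomorphism `q : A → B` with kernel `I` under which reduction modulo
`I` behaves well on presentations by finitely generated projective modules: `I` is contained in the
radical, a matrix over `A` is injective if and only if its reduction is, and a matrix with entries
in `I` extends along every injective matrix to a matrix with entries in `I`. -/
structure IsPresentationFaithful {A B : Type} [Ring A] [Ring B] (q : A →+* B) : Prop where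
  ker_le_jacobson : RingHom.ker q ≤ Ring.jacobson A
  free_injective_iff : ∀ {α β : Type} [Finite α] [Finite β] (φ : (α → A) →ₗ[A] (β → A)),
    Function.Injective φ ↔ ∀ x, φ x ∈ kerSMul q (β → A) → x ∈ kerSMul q (α → A)
  free_exists_extension : ∀ {α β γ : Type} [Finite α] [Finite β] [Finite γ]
    (φ : (α → A) →ₗ[A] (β → A)) (θ : (α → A) →ₗ[A] (γ → A)), Function.Injective φ →
    (∀ x, θ x ∈ kerSMul q (γ → A)) →
    ∃ θ' : (β → A) →ₗ[A] (γ → A), (∀ x, θ' x ∈ kerSMul q (γ → A)) ∧ ∀ x, θ' (φ x) = θ x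

namespace IsPresentationFaithful

variable {A B : Type} [Ring A] [Ring B] {q : A →+* B} (hq : IsPresentationFaithful q)
  {M N X Y P Q : Type} [AddCommGroup M] [Module A M] [AddCommGroup N] [Module A N]
  [AddCommGroup X] [Module A X] [AddCommGroup Y] [Module A Y] [AddCommGroup P] [Module A P]
  [AddCommGroup Q] [Module A Q]
  {Z Z' L : Type} [AddCommGroup Z] [Module B Z] [AddCommGroup Z'] [Module B Z']
  [AddCommGroup L] [Module B L]

include hq

theorem subsingleton_of_kerSMul_eq_top [Module.Finite A M] (h : kerSMul q M = ⊤) :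
    Subsingleton M := by
  have htop : (⊤ : Submodule A M) = ⊥ :=
    Submodule.FG.eq_bot_of_le_jacobson_smul Module.Finite.fg_top
      (h.ge.trans (Submodule.smul_mono_left hq.ker_le_jacobson))
  exact (Submodule.subsingleton_iff A).1 (subsingleton_of_bot_eq_top htop.symm)

theorem surjective_of_reduction [Module.Finite A Y] {pX : X →ₛₗ[q] Z} {pY : Y →ₛₗ[q] Z'}
    (hX : IsReduction pX) (hY : IsReduction pY) (f : X →ₗ[A] Y) (h : Z →ₗ[B] Z')
    (hf : ∀ x, pY (f x) = h (pX x)) (hh : Function.Surjective h) : Function.Surjective f := by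
  rw [← LinearMap.range_eq_top, ← Submodule.Quotient.subsingleton_iff]
  refine hq.subsingleton_of_kerSMul_eq_top (eq_top_iff.2 fun y _ => ?_)
  obtain ⟨y, rfl⟩ := (LinearMap.range f).mkQ_surjective y
  obtain ⟨z, hz⟩ := hh (pY y)
  obtain ⟨x, rfl⟩ := hX.surjective z
  have hmem : y - f x ∈ kerSMul q Y := hY.ker_le _ (by simp [hf, hz])
  have hmk : (LinearMap.range f).mkQ y = (LinearMap.range f).mkQ (y - f x) :=
    (Submodule.Quotient.eq _).2 ⟨x, by simp⟩
  exact hmk ▸ map_mem_kerSMul _ hmem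

theorem injective_iff (φ : P →ₗ[A] Q) [Module.Finite A P] [Module.Projective A P]
    [Module.Finite A Q] [Module.Projective A Q] :
    Function.Injective φ ↔ ∀ x, φ x ∈ kerSMul q Q → x ∈ kerSMul q P := by
  obtain ⟨S⟩ := nonempty_freeStabilization φ
  rw [← S.injective_map_iff, hq.free_injective_iff, S.kerSMul_map_iff]

theorem mem_kerSMul_of_coe_mem {K : Submodule A Q} [Module.Finite A K] [Module.Projective A K]
    [Module.Finite A Q] [Module.Projective A Q] {x : K} (hx : (x : Q) ∈ kerSMul q Q) :
    x ∈ kerSMul q K :=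
  (hq.injective_iff K.subtype).1 K.subtype_injective x hx

theorem exists_extension (φ : P →ₗ[A] Q) [Module.Finite A P] [Module.Projective A P]
    [Module.Finite A Q] [Module.Projective A Q] [Module.Finite A Y] (hφ : Function.Injective φ)
    (θ : P →ₗ[A] Y) (hθ : ∀ x, θ x ∈ kerSMul q Y) :
    ∃ θ' : Q →ₗ[A] Y, (∀ x, θ' x ∈ kerSMul q Y) ∧ ∀ x, θ' (φ x) = θ x := by
  obtain ⟨S⟩ := nonempty_freeStabilization φ
  obtain ⟨c, w, hw⟩ := Module.Finite.exists_fin' A Y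
  obtain ⟨Θ, hΘ, hΘI⟩ := exists_lift_mem_kerSMul w hw (θ ∘ₗ S.projSource) fun x => hθ _
  obtain ⟨Θ', hI, hΘ'⟩ := hq.free_exists_extension S.map Θ (S.injective_map_iff.2 hφ) hΘI
  refine ⟨w ∘ₗ Θ' ∘ₗ S.inclTarget, fun x => map_mem_kerSMul w (hI _), fun x => ?_⟩
  simp only [LinearMap.comp_apply]
  rw [← S.map_inclSource, hΘ', hΘ, LinearMap.comp_apply, S.projSource_inclSource]

variable [IsNoetherianRing A]

theorem exists_lift [Module.Finite A X] [Module.Finite A Y] (hpd : PdLeOne A X)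
    (pX : X →ₛₗ[q] Z) {pY : Y →ₛₗ[q] Z'} (hY : IsReduction pY) (h : Z →ₗ[B] Z') :
    ∃ f : X →ₗ[A] Y, ∀ x, pY (f x) = h (pX x) := by
  obtain ⟨k, g, hg, _⟩ := hpd.exists_presentation
  obtain ⟨f₀, hf₀⟩ := exists_lift_of_projective (σ := RingHom.id A) pY hY.surjective
    ((h.comp pX).comp g)
  -- `f₀` need not vanish on `ker g`, but there it has values in `I Y`, so it can be corrected.
  obtain ⟨f₁, hf₁, hf₁₀⟩ := hq.exists_extension (LinearMap.ker g).subtype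
    (Submodule.subtype_injective _) (f₀ ∘ₗ (LinearMap.ker g).subtype) fun x =>
      hY.ker_le _ (by simp [hf₀])
  obtain ⟨f, hf⟩ := exists_factor_of_surjective (τ := RingHom.id A) g hg (f₀ - f₁) fun x hx =>
    sub_eq_zero.2 (hf₁₀ ⟨x, hx⟩).symm
  refine ⟨f, fun x => ?_⟩
  obtain ⟨y, rfl⟩ := hg x
  simp [hf, hf₀, map_eq_zero_of_mem_kerSMul pY (hf₁ y)]

theorem nonempty_equiv_of_reduction [Module.Finite A X] [Module.Finite A Y] (hpdX : PdLeOne A X)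
    (hpdY : PdLeOne A Y) {pX : X →ₛₗ[q] Z} {pY : Y →ₛₗ[q] Z'} (hX : IsReduction pX)
    (hY : IsReduction pY) (e : Z ≃ₗ[B] Z') : Nonempty (X ≃ₗ[A] Y) := by
  obtain ⟨f, hf⟩ := hq.exists_lift hpdX pX hY e.toLinearMap
  obtain ⟨g, hg⟩ := hq.exists_lift hpdY pY hX e.symm.toLinearMap
  have hfs := hq.surjective_of_reduction hX hY f _ hf e.surjective
  have hgs := hq.surjective_of_reduction hY hX g _ hg e.symm.surjective
  have hinj : Function.Injective (g ∘ₗ f) :=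
    IsNoetherian.injective_of_surjective_endomorphism (g ∘ₗ f) (hgs.comp hfs)
  exact ⟨.ofBijective f ⟨Function.Injective.of_comp hinj, hfs⟩⟩

/- Purity: `f` stays injective after reduction, since `Tor₁(X, B) = 0`. -/
theorem mem_kerSMul_of_shortExact [Module.Finite A X] (hpd : PdLeOne A X) (f : M →ₗ[A] N)
    (g : N →ₗ[A] X) (hf : Function.Injective f) (hg : Function.Surjective g)
    (hex : LinearMap.range f = LinearMap.ker g) {m : M} (hm : f m ∈ kerSMul q N) :
    m ∈ kerSMul q M := by
  obtain ⟨k, c, hc, _⟩ := hpd.exists_presentation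
  obtain ⟨l, hl⟩ := exists_lift_of_projective (σ := RingHom.id A) g hg c
  have hgf : ∀ m, g (f m) = 0 := fun m => LinearMap.mem_ker.1 (hex ▸ ⟨m, rfl⟩)
  have hw : Function.Surjective (f.coprod l) := by
    intro n
    obtain ⟨y, hy⟩ := hc (g n)
    obtain ⟨m', hm'⟩ : n - l y ∈ LinearMap.range f := by simp [hex, hl, hy]
    exact ⟨(m', y), by simp [hm']⟩
  obtain ⟨⟨m', y⟩, hmem, hmy⟩ := exists_mem_kerSMul_of_surjective (f.coprod l) hw hm
  have hm' : m' ∈ kerSMul q M := map_mem_kerSMul (LinearMap.fst A _ _) hmem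
  have hy : y ∈ kerSMul q _ := map_mem_kerSMul (LinearMap.snd A _ _) hmem
  have hcy : c y = 0 := by simpa [hgf, hl] using congrArg g hmy
  obtain ⟨l', hl'⟩ := exists_factor_of_injective f hf (l ∘ₗ (LinearMap.ker c).subtype) fun x => by
    simp [hex, hl]
  have hdecomp : m = m' + l' ⟨y, hcy⟩ := hf (by simp [hl', ← hmy])
  rw [hdecomp]
  exact add_mem hm' (map_mem_kerSMul l' (hq.mem_kerSMul_of_coe_mem hy))

variable [RingHomSurjective q]

theorem exists_reduction_presentation [Module.Finite A P] [Module.Projective A P]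
    {pP : P →ₛₗ[q] L} {pX : X →ₛₗ[q] Z} (hP : IsReduction pP) (hX : IsReduction pX)
    (g : P →ₗ[A] X) (hg : Function.Surjective g) (hker : Module.Projective A (LinearMap.ker g)) :
    ∃ (g' : L →ₗ[B] Z) (r : LinearMap.ker g →ₛₗ[q] LinearMap.ker g'),
      Function.Surjective g' ∧ IsReduction r ∧ ∀ x : LinearMap.ker g, (r x : L) = pP x := by
  obtain ⟨g', hg'⟩ := hP.exists_map pX g
  let r : LinearMap.ker g →ₛₗ[q] LinearMap.ker g' :=
    { toFun := fun x => ⟨pP x, by simp [hg']⟩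
      map_add' := fun x y => by ext; simp
      map_smul' := fun a x => by ext; simp }
  refine ⟨g', r, ?_, ⟨?_, fun x hx => ?_⟩, fun x => rfl⟩
  · refine Function.Surjective.of_comp (g := pP) ?_
    simpa [Function.comp_def, hg'] using hX.surjective.comp hg
  · rintro ⟨z, hz⟩
    obtain ⟨x, rfl⟩ := hP.surjective z
    obtain ⟨y, hy, hyx⟩ := exists_mem_kerSMul_of_surjective g hg
      (hX.ker_le (g x) (by rw [← hg']; exact hz))
    refine ⟨⟨x - y, by simp [hyx]⟩, Subtype.ext ?_⟩
    simp [r, map_eq_zero_of_mem_kerSMul pP hy]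
  · exact hq.mem_kerSMul_of_coe_mem (hP.ker_le _ (congrArg Subtype.val hx))

theorem pdLeOne_reduction [Module.Finite A X] (hpd : PdLeOne A X) {pX : X →ₛₗ[q] Z}
    (hX : IsReduction pX) : PdLeOne B Z := by
  obtain ⟨k, g, hg, hker⟩ := hpd.exists_presentation
  obtain ⟨g', r, hg', hr, -⟩ := hq.exists_reduction_presentation isReduction_free hX g hg hker
  exact .of_surjective g' hg' hr.projective

theorem ext1Zero_reduction [Module.Finite A X] (hpd : PdLeOne A X)
    {pX : X →ₛₗ[q] Z} {pY : Y →ₛₗ[q] Z'} (hX : IsReduction pX) (hY : IsReduction pY)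
    (h : Ext1Zero A X Y) : Ext1Zero B Z Z' := by
  obtain ⟨k, g, hg, hker⟩ := hpd.exists_presentation
  obtain ⟨g', r, hg', hr, hrp⟩ := hq.exists_reduction_presentation isReduction_free hX g hg hker
  refine .of_exists_extension g' hg' fun θ => ?_
  obtain ⟨l, hl⟩ := exists_lift_of_projective (σ := RingHom.id A) pY hY.surjective (θ.comp r)
  obtain ⟨l', hl'⟩ := h.exists_extension g hg l
  obtain ⟨θ', hθ'⟩ := isReduction_free.exists_map pY l'
  refine ⟨θ', fun z => ?_⟩
  obtain ⟨x, rfl⟩ := hr.surjective z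
  rw [hrp, hθ', hl', hl, LinearMap.comp_apply]

theorem ext1Zero_of_reduction [Module.Finite A X] [Module.Finite A Y] (hpd : PdLeOne A X)
    {pX : X →ₛₗ[q] Z} {pY : Y →ₛₗ[q] Z'} (hX : IsReduction pX) (hY : IsReduction pY)
    (h : Ext1Zero B Z Z') : Ext1Zero A X Y := by
  obtain ⟨k, g, hg, hker⟩ := hpd.exists_presentation
  obtain ⟨g', r, hg', hr, hrp⟩ := hq.exists_reduction_presentation isReduction_free hX g hg hker
  refine .of_exists_extension g hg fun θ => ?_
  obtain ⟨θ₁, hθ₁⟩ := hr.exists_map pY θ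
  obtain ⟨θ₂, hθ₂⟩ := h.exists_extension g' hg' θ₁
  obtain ⟨l, hl⟩ := exists_lift_of_projective (σ := RingHom.id A) pY hY.surjective
    (θ₂.comp (semilinearPi fun _ : Fin k => q.toSemilinearMap))
  have hsub : ∀ x : LinearMap.ker g, pY (θ x - l x) = 0 := fun x => by
    rw [map_sub, hl, LinearMap.comp_apply, ← hrp, hθ₂, hθ₁, sub_self]
  obtain ⟨m, -, hm⟩ := hq.exists_extension (LinearMap.ker g).subtype
    (Submodule.subtype_injective _) (θ - l ∘ₗ (LinearMap.ker g).subtype) fun x =>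
      hY.ker_le _ (hsub x)
  refine ⟨l + m, fun x => ?_⟩
  rw [LinearMap.add_apply, show m x = θ x - l x from hm x, add_sub_cancel]

end IsPresentationFaithful

theorem InAdd.reduction {A B : Type} [Ring A] [Ring B] {q : A →+* B} [RingHomSurjective q]
    {T X Z Z' : Type} [AddCommGroup T] [Module A T] [AddCommGroup X] [Module A X]
    [AddCommGroup Z] [Module B Z] [AddCommGroup Z'] [Module B Z'] (h : InAdd A T X)
    {pT : T →ₛₗ[q] Z} {pX : X →ₛₗ[q] Z'} (hT : IsReduction pT) (hX : IsReduction pX) :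
    InAdd B Z Z' := by
  obtain ⟨k, f, g, hgf⟩ := h
  obtain ⟨f', hf'⟩ := hX.exists_map (semilinearPi fun _ : Fin k => pT) f
  obtain ⟨g', hg'⟩ := (IsReduction.pi fun _ : Fin k => hT).exists_map pX g
  refine ⟨k, f', g', ?_⟩
  ext z
  obtain ⟨x, rfl⟩ := hX.surjective z
  simp only [LinearMap.comp_apply, hf', hg', LinearMap.id_apply]
  exact congrArg pX (LinearMap.congr_fun hgf x)

section Cokernel

variable {A B : Type*} [Ring A] [Ring B] {q : A →+* B}
  {F P X : Type*} [AddCommGroup F] [Module A F] [AddCommGroup P] [Module A P]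
  [AddCommGroup X] [Module A X]
  {L Z Z' : Type*} [AddCommGroup L] [Module B L] [AddCommGroup Z] [Module B Z]
  [AddCommGroup Z'] [Module B Z']

theorem IsReduction.exists_coker {pP : P →ₛₗ[q] L} {pX : X →ₛₗ[q] Z}
    (hP : Function.Surjective pP) (hX : IsReduction pX) {f : P →ₗ[A] X} {f' : L →ₗ[B] Z}
    (hf : ∀ x, pX (f x) = f' (pP x)) {g' : Z →ₗ[B] Z'} (hg' : Function.Surjective g')
    (hex : LinearMap.range f' = LinearMap.ker g') :
    ∃ p : (X ⧸ LinearMap.range f) →ₛₗ[q] Z', IsReduction p := by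
  refine ⟨(LinearMap.range f).liftQ (g'.comp pX) ?_, fun z => ?_, fun c hc => ?_⟩
  · rintro _ ⟨x, rfl⟩
    rw [LinearMap.mem_ker, LinearMap.comp_apply, hf, ← LinearMap.mem_ker, ← hex]
    exact ⟨pP x, rfl⟩
  · obtain ⟨z, rfl⟩ := hg' z
    obtain ⟨x, rfl⟩ := hX.surjective z
    exact ⟨(LinearMap.range f).mkQ x, rfl⟩
  · obtain ⟨x, rfl⟩ := (LinearMap.range f).mkQ_surjective c
    obtain ⟨l, hl⟩ : pX x ∈ LinearMap.range f' := hex ▸ hc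
    obtain ⟨y, rfl⟩ := hP l
    have hmk : (LinearMap.range f).mkQ x = (LinearMap.range f).mkQ (x - f y) :=
      (Submodule.Quotient.eq _).2 ⟨y, by simp⟩
    rw [hmk]
    exact map_mem_kerSMul _ (hX.ker_le _ (by rw [map_sub, hf, hl, sub_self]))

theorem ker_mkQ_range_comp (g : F →ₗ[A] X) {f : P →ₗ[A] X} {l : P →ₗ[A] F}
    (hl : ∀ x, g (l x) = f x) :
    LinearMap.ker ((LinearMap.range f).mkQ ∘ₗ g) =
      LinearMap.range ((LinearMap.ker g).subtype.coprod l) := by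
  ext x
  rw [LinearMap.mem_ker, LinearMap.comp_apply, Submodule.mkQ_apply,
    Submodule.Quotient.mk_eq_zero]
  constructor
  · rintro ⟨a, ha⟩
    exact ⟨(⟨x - l a, by simp [hl, ha]⟩, a), by simp⟩
  · rintro ⟨⟨y, a⟩, rfl⟩
    exact ⟨a, by simp [hl]⟩

end Cokernel

namespace IsPresentationFaithful

variable {A B : Type} [Ring A] [Ring B] {q : A →+* B} [IsNoetherianRing A]
  (hq : IsPresentationFaithful q)
  {M N P T X : Type} [AddCommGroup M] [Module A M] [AddCommGroup N] [Module A N]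
  [AddCommGroup P] [Module A P] [AddCommGroup T] [Module A T] [AddCommGroup X] [Module A X]
  {L Z Z' : Type} [AddCommGroup L] [Module B L] [AddCommGroup Z] [Module B Z]
  [AddCommGroup Z'] [Module B Z']

include hq

theorem injective_and_pdLeOne_coker [Module.Finite A P] [Module.Projective A P]
    [Module.Finite A X] (hpd : PdLeOne A X) {pP : P →ₛₗ[q] L} (hP : IsReduction pP)
    (pX : X →ₛₗ[q] Z) {f : P →ₗ[A] X} {f' : L →ₗ[B] Z} (hf' : Function.Injective f')
    (hf : ∀ x, pX (f x) = f' (pP x)) :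
    Function.Injective f ∧ PdLeOne A (X ⧸ LinearMap.range f) := by
  obtain ⟨k, g, hg, _⟩ := hpd.exists_presentation
  obtain ⟨l, hl⟩ := exists_lift_of_projective (σ := RingHom.id A) g hg f
  let φ : (LinearMap.ker g × P) →ₗ[A] (Fin k → A) := (LinearMap.ker g).subtype.coprod l
  have hgφ : ∀ x, g (φ x) = f x.2 := fun x => by simp [φ, hl]
  have hφ : Function.Injective φ := by
    refine (hq.injective_iff φ).2 fun x hx => ?_
    have hfx := map_eq_zero_of_mem_kerSMul pX (map_mem_kerSMul g hx)
    rw [hgφ, hf, map_eq_zero_iff f' hf'] at hfx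
    have hx₂ : x.2 ∈ kerSMul q P := hP.ker_le _ hfx
    have hx₁ : (x.1 : Fin k → A) ∈ kerSMul q (Fin k → A) := by
      simpa [φ] using sub_mem hx (map_mem_kerSMul l hx₂)
    exact mem_kerSMul_prod (hq.mem_kerSMul_of_coe_mem hx₁) hx₂
  constructor
  · refine (injective_iff_map_eq_zero f).2 fun a ha => ?_
    have hker : φ (-⟨l a, by simp [hl, ha]⟩, a) = 0 := by simp [φ]
    exact congrArg Prod.snd ((injective_iff_map_eq_zero φ).1 hφ _ hker)
  · refine .of_surjective ((LinearMap.range f).mkQ ∘ₗ g)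
      ((LinearMap.range f).mkQ_surjective.comp hg) ?_
    rw [ker_mkQ_range_comp g hl]
    exact .of_equiv' (LinearEquiv.ofInjective φ hφ)

theorem inAdd_of_reduction [Module.Finite A T] [Module.Finite A X] (hpdT : PdLeOne A T)
    (hpdX : PdLeOne A X) {pT : T →ₛₗ[q] Z} {pX : X →ₛₗ[q] Z'} (hT : IsReduction pT)
    (hX : IsReduction pX) (h : InAdd B Z Z') : InAdd A T X := by
  obtain ⟨n, u', v', hvu⟩ := h
  obtain ⟨u, hu⟩ := hq.exists_lift hpdX pX (IsReduction.pi fun _ : Fin n => hT) u'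
  obtain ⟨v, hv⟩ := hq.exists_lift (.pi fun _ => hpdT) (semilinearPi fun _ : Fin n => pT) hX v'
  have hsurj : Function.Surjective (v ∘ₗ u) :=
    hq.surjective_of_reduction hX hX (v ∘ₗ u) LinearMap.id
      (fun x => by rw [LinearMap.comp_apply, hv, hu]; exact LinearMap.congr_fun hvu _)
      Function.surjective_id
  let e := LinearEquiv.ofBijective (v ∘ₗ u)
    ⟨IsNoetherian.injective_of_surjective_endomorphism _ hsurj, hsurj⟩
  exact (InAdd.pow n).of_retract (u ∘ₗ e.symm.toLinearMap) v e.apply_symm_apply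

theorem exists_shortExact_reduction [RingHomSurjective q] [Module.Finite A X]
    (hpd : PdLeOne A X) {pM : M →ₛₗ[q] L} {pN : N →ₛₗ[q] Z} {pX : X →ₛₗ[q] Z'}
    (hM : IsReduction pM) (hN : IsReduction pN) (hX : IsReduction pX) {f : M →ₗ[A] N}
    {g : N →ₗ[A] X} (hf : Function.Injective f) (hg : Function.Surjective g)
    (hex : LinearMap.range f = LinearMap.ker g) :
    ∃ (f' : L →ₗ[B] Z) (g' : Z →ₗ[B] Z'), Function.Injective f' ∧ Function.Surjective g' ∧
      LinearMap.range f' = LinearMap.ker g' := by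
  obtain ⟨f', hf'⟩ := hM.exists_map pN f
  obtain ⟨g', hg'⟩ := hN.exists_map pX g
  have hgf : ∀ m, g (f m) = 0 := fun m => LinearMap.mem_ker.1 (hex ▸ ⟨m, rfl⟩)
  refine ⟨f', g', (injective_iff_map_eq_zero f').2 fun l hl => ?_, ?_, le_antisymm ?_ ?_⟩
  · obtain ⟨m, rfl⟩ := hM.surjective l
    rw [hf'] at hl
    exact map_eq_zero_of_mem_kerSMul _
      (hq.mem_kerSMul_of_shortExact hpd f g hf hg hex (hN.ker_le _ hl))
  · refine Function.Surjective.of_comp (g := pN) ?_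
    simpa [Function.comp_def, hg'] using hX.surjective.comp hg
  · rintro _ ⟨l, rfl⟩
    obtain ⟨m, rfl⟩ := hM.surjective l
    rw [LinearMap.mem_ker, hf', hg', hgf, map_zero]
  · intro z hz
    obtain ⟨x, rfl⟩ := hN.surjective z
    rw [LinearMap.mem_ker, hg'] at hz
    obtain ⟨y, hy, hyx⟩ := exists_mem_kerSMul_of_surjective g hg (hX.ker_le _ hz)
    obtain ⟨m, hm⟩ : x - y ∈ LinearMap.range f := by simp [hex, hyx]
    exact ⟨pM m, by rw [hf', hm, map_sub, map_eq_zero_of_mem_kerSMul pN hy, sub_zero]⟩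

end IsPresentationFaithful

/-! ### Tilting modules and their reductions -/

/-- A tilting left module over `A`: finitely generated, of projective dimension at most one, without
self-extensions, and with a short exact sequence `0 → A → T₀ → T₁ → 0` in which `T₀, T₁ ∈ add T`.
For `A = Rᵐᵒᵖ` this is `IsTiltingRight R`, up to the identification of `R` with `Rᵐᵒᵖ`. -/
def IsTilting (A : Type) [Ring A] (T : Type) [AddCommGroup T] [Module A T] : Prop :=
  Module.Finite A T ∧ PdLeOne A T ∧ Ext1Zero A T T ∧
    ∃ (T₀ T₁ : ModuleCat.{0} A) (f : A →ₗ[A] T₀) (g : T₀ →ₗ[A] T₁),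
      InAdd A T T₀ ∧ InAdd A T T₁ ∧
        Function.Injective f ∧ Function.Surjective g ∧ LinearMap.range f = LinearMap.ker g

theorem InAdd.quotient_range_comp {A : Type} [Ring A] {T P T₀ T₁ Y : Type} [AddCommGroup T]
    [Module A T] [AddCommGroup P] [Module A P] [AddCommGroup T₀] [Module A T₀] [AddCommGroup T₁]
    [Module A T₁] [AddCommGroup Y] [Module A Y] {f : P →ₗ[A] T₀} {g : T₀ →ₗ[A] T₁}
    (hg : Function.Surjective g) (hex : LinearMap.range f = LinearMap.ker g)
    (hT₁ : InAdd A T T₁) (hY : InAdd A T Y) {j : T₀ →ₗ[A] Y} {r : Y →ₗ[A] T₀}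
    (hrj : Function.LeftInverse r j) : InAdd A T (Y ⧸ LinearMap.range (j ∘ₗ f)) := by
  let π := (LinearMap.range (j ∘ₗ f)).mkQ
  have hgf : ∀ x, g (f x) = 0 := fun x => LinearMap.mem_ker.1 (hex ▸ ⟨x, rfl⟩)
  obtain ⟨s, hs⟩ := exists_factor_of_surjective (τ := RingHom.id A) π (Submodule.mkQ_surjective _)
    ((g ∘ₗ r).prod (LinearMap.id - j ∘ₗ r)) fun x hx => by
      obtain ⟨b, rfl⟩ := (Submodule.Quotient.mk_eq_zero _).1 hx
      simp [hrj (f b), hgf]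
  obtain ⟨t, ht⟩ := exists_factor_of_surjective (τ := RingHom.id A) g hg (π ∘ₗ j) fun x hx => by
    obtain ⟨b, rfl⟩ : x ∈ LinearMap.range f := hex ▸ hx
    exact (Submodule.Quotient.mk_eq_zero _).2 ⟨b, rfl⟩
  refine (hT₁.prod hY).of_retract s (t.coprod (π ∘ₗ (LinearMap.id - j ∘ₗ r))) fun x => ?_
  obtain ⟨y, rfl⟩ := Submodule.mkQ_surjective _ x
  rw [hs]
  change t (g (r y)) + π ((y - j (r y)) - j (r (y - j (r y)))) = π y
  rw [ht, LinearMap.comp_apply, ← map_add, map_sub r, hrj, sub_self, map_zero, sub_zero,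
    add_sub_cancel]

theorem IsTilting.exists_injective_pow {A T : Type} [Ring A] [AddCommGroup T] [Module A T]
    (h : IsTilting A T) : ∃ (k : ℕ) (f : A →ₗ[A] (Fin k → T)),
      Function.Injective f ∧ InAdd A T ((Fin k → T) ⧸ LinearMap.range f) := by
  obtain ⟨-, -, -, T₀, T₁, f, g, ⟨k, j, r, hrj⟩, hT₁, hf, hg, hex⟩ := h
  have hrj : Function.LeftInverse r j := LinearMap.congr_fun hrj
  exact ⟨k, j ∘ₗ f, hrj.injective.comp hf, .quotient_range_comp hg hex hT₁ (.pow k) hrj⟩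

namespace IsPresentationFaithful

variable {A B : Type} [Ring A] [Ring B] {q : A →+* B} [RingHomSurjective q] [IsNoetherianRing A]
  (hq : IsPresentationFaithful q)
  {T Z : Type} [AddCommGroup T] [Module A T] [AddCommGroup Z] [Module B Z]

include hq

theorem isTilting_reduction {p : T →ₛₗ[q] Z} (hp : IsReduction p) (h : IsTilting A T) :
    IsTilting B Z := by
  obtain ⟨_, hpd, hext, T₀, T₁, f, g, hT₀, hT₁, hf, hg, hex⟩ := h
  have := hT₁.finite
  obtain ⟨Z₀, p₀, hp₀⟩ := exists_isReduction q T₀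
  obtain ⟨Z₁, p₁, hp₁⟩ := exists_isReduction q T₁
  obtain ⟨f', g', hexact⟩ := hq.exists_shortExact_reduction (hT₁.pdLeOne hpd)
    isReduction_toSemilinearMap hp₀ hp₁ hf hg hex
  exact ⟨hp.finite, hq.pdLeOne_reduction hpd hp, hq.ext1Zero_reduction hpd hp hp hext,
    Z₀, Z₁, f', g', hT₀.reduction hp hp₀, hT₁.reduction hp hp₁, hexact⟩

theorem isTilting_of_reduction [Module.Finite A T] (hpd : PdLeOne A T) {p : T →ₛₗ[q] Z}
    (hp : IsReduction p) (h : IsTilting B Z) : IsTilting A T := by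
  obtain ⟨k, f', hf', hcoker⟩ := h.exists_injective_pow
  have hpow : IsReduction (semilinearPi fun _ : Fin k => p) := .pi fun _ => hp
  obtain ⟨f, hf⟩ := exists_lift_of_projective (σ := RingHom.id A) _ hpow.surjective
    (f'.comp q.toSemilinearMap)
  obtain ⟨hinj, hpdC⟩ := hq.injective_and_pdLeOne_coker (.pi fun _ => hpd)
    isReduction_toSemilinearMap _ hf' hf
  obtain ⟨pC, hC⟩ := hpow.exists_coker q.surjective hf (LinearMap.range f').mkQ_surjective
    (Submodule.ker_mkQ _).symm
  exact ⟨inferInstance, hpd, hq.ext1Zero_of_reduction hpd hp hp h.2.2.1,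
    ModuleCat.of A (Fin k → T), ModuleCat.of A ((Fin k → T) ⧸ LinearMap.range f), f,
    (LinearMap.range f).mkQ, .pow k, hq.inAdd_of_reduction hpd hpdC hp hC hcoker, hinj,
    (LinearMap.range f).mkQ_surjective, (Submodule.ker_mkQ _).symm⟩

end IsPresentationFaithful

theorem exists_isCompl_ker_range_pow_succ {A M : Type*} [Ring A] [AddCommGroup M] [Module A M]
    [IsArtinian A M] [IsNoetherian A M] (f : Module.End A M) :
    ∃ n, IsCompl (LinearMap.ker (f ^ (n + 1))) (LinearMap.range (f ^ (n + 1))) := by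
  obtain ⟨n, hn⟩ := Filter.eventually_atTop.1 f.eventually_isCompl_ker_pow_range_pow
  exact ⟨n, hn _ n.le_succ⟩

theorem apply_pow_succ_of_idempotent {A B M Z : Type*} [Ring A] [Ring B] {q : A →+* B}
    [AddCommGroup M] [Module A M] [AddCommGroup Z] [Module B Z] {p : M →ₛₗ[q] Z}
    {f : Module.End A M} {e : Module.End B Z} (he : IsIdempotentElem e)
    (hf : ∀ x, p (f x) = e (p x)) (n : ℕ) (x : M) : p ((f ^ (n + 1)) x) = e (p x) := by
  induction n generalizing x with
  | zero => simpa using hf x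
  | succ n ih => rw [pow_succ, Module.End.mul_apply, ih, hf, ← Module.End.mul_apply, he.eq]

theorem PdLeOne.of_projective {A P : Type} [Ring A] [AddCommGroup P] [Module A P]
    [Module.Projective A P] : PdLeOne A P :=
  .of_surjective LinearMap.id Function.surjective_id (by rw [LinearMap.ker_id]; infer_instance)

/- By Fitting's lemma a high power of a lift of an idempotent matrix splits off a summand. -/
theorem exists_projective_lift {A B : Type} [Ring A] [Ring B] [IsArtinianRing A] (q : A →+* B)
    [RingHomSurjective q] (L : Type) [AddCommGroup L] [Module B L] [Module.Finite B L]
    [Module.Projective B L] :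
    ∃ (P : ModuleCat.{0} A) (p : P →ₛₗ[q] L), Module.Finite A P ∧ Module.Projective A P ∧
      IsReduction p := by
  obtain ⟨k, s, r, hrs⟩ := exists_retract_of_free B L
  let pF : (Fin k → A) →ₛₗ[q] (Fin k → B) := semilinearPi fun _ => q.toSemilinearMap
  have hF : IsReduction pF := isReduction_free
  obtain ⟨f, hf⟩ := exists_lift_of_projective (σ := RingHom.id A) pF hF.surjective
    ((s ∘ₗ r).comp pF)
  have hsr : IsIdempotentElem (M := Module.End B (Fin k → B)) (s ∘ₗ r) :=
    LinearMap.ext fun x => congrArg s (hrs (r x))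
  obtain ⟨n, hn⟩ := exists_isCompl_ker_range_pow_succ f
  have hpow : ∀ x, pF ((f ^ (n + 1)) x) = s (r (pF x)) := apply_pow_succ_of_idempotent hsr hf n
  let P := LinearMap.range (f ^ (n + 1))
  let t : (Fin k → A) →ₗ[A] P := Submodule.projectionOnto _ _ hn.symm
  have ht : ∀ x : P, t x = x := Submodule.projectionOnto_apply_left hn.symm
  refine ⟨ModuleCat.of A P, r.comp (pF.comp P.subtype), inferInstanceAs (Module.Finite A P),
    .of_split P.subtype t (LinearMap.ext ht), fun l => ?_, ?_⟩
  · obtain ⟨y, hy⟩ := hF.surjective (s l)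
    refine ⟨⟨(f ^ (n + 1)) y, y, rfl⟩, ?_⟩
    change r (pF ((f ^ (n + 1)) y)) = l
    rw [hpow, hy, hrs, hrs]
  · rintro ⟨_, y, rfl⟩ hx
    have hry : r (pF y) = 0 := by
      rw [← hrs (r (pF y)), ← hpow]
      exact hx
    rw [← ht ⟨_, y, rfl⟩]
    exact map_mem_kerSMul t (hF.ker_le _ (by rw [hpow, hry, map_zero]))

theorem IsPresentationFaithful.exists_pdLeOne_lift {A B : Type} [Ring A] [Ring B]
    [IsArtinianRing A] {q : A →+* B} [RingHomSurjective q] (hq : IsPresentationFaithful q)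
    {Z : Type} [AddCommGroup Z] [Module B Z] [Module.Finite B Z] (hpd : PdLeOne B Z) :
    ∃ (X : ModuleCat.{0} A) (p : X →ₛₗ[q] Z),
      Module.Finite A X ∧ PdLeOne A X ∧ IsReduction p := by
  have : IsNoetherianRing B := isNoetherianRing_of_surjective A B q q.surjective
  obtain ⟨k, g, hg, _⟩ := hpd.exists_presentation
  obtain ⟨P, pP, _, _, hP⟩ := exists_projective_lift q (LinearMap.ker g)
  let pF : (Fin k → A) →ₛₗ[q] (Fin k → B) := semilinearPi fun _ => q.toSemilinearMap
  have hF : IsReduction pF := isReduction_free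
  obtain ⟨φ, hφ⟩ := exists_lift_of_projective (σ := RingHom.id A) pF hF.surjective
    ((LinearMap.ker g).subtype.comp pP)
  obtain ⟨p, hp⟩ := hF.exists_coker hP.surjective hφ hg (Submodule.range_subtype _)
  exact ⟨ModuleCat.of A ((Fin k → A) ⧸ LinearMap.range φ), p,
    inferInstanceAs (Module.Finite A ((Fin k → A) ⧸ LinearMap.range φ)),
    (hq.injective_and_pdLeOne_coker .of_projective hP pF (Submodule.subtype_injective _) hφ).2, hp⟩

/-! ### Indecomposable and basic modules -/

section Indecomposable

variable {A M N : Type} [Ring A] [AddCommGroup M] [Module A M] [AddCommGroup N] [Module A N]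

theorem isIndecomposableMod_iff_isIdempotentElem : IsIndecomposableMod A M ↔
    Nontrivial M ∧ ∀ f : Module.End A M, IsIdempotentElem f → f = 0 ∨ f = 1 := by
  refine and_congr_right fun _ => ⟨fun h f hf => ?_, fun h N N' hc => ?_⟩
  · rcases h _ _ (LinearMap.IsIdempotentElem.isCompl hf) with hrange | hker
    · exact .inl (LinearMap.range_eq_bot.1 hrange)
    · exact .inr (LinearMap.ext fun x => LinearMap.ker_eq_bot.1 hker (LinearMap.congr_fun hf x))
  · rcases h _ (Submodule.isIdempotentElem_projection hc) with hproj | hproj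
    · left
      rw [← Submodule.range_projection hc, hproj, LinearMap.range_zero]
    · right
      rw [← Submodule.ker_projection hc, hproj, Module.End.one_eq_id, LinearMap.ker_id]

theorem IsIndecomposableMod.of_equiv (e : M ≃ₗ[A] N) (h : IsIndecomposableMod A M) :
    IsIndecomposableMod A N := by
  obtain ⟨_, h⟩ := h
  refine ⟨e.symm.toEquiv.nontrivial, fun N N' hc => ?_⟩
  simpa using h _ _ (hc.map (Submodule.orderIsoMapComap e.symm))

theorem IsIndecomposableMod.isNilpotent_or_bijective [IsArtinian A M] [IsNoetherian A M]
    (h : IsIndecomposableMod A M) (f : Module.End A M) :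
    (∃ n, f ^ (n + 1) = 0) ∨ Function.Bijective f := by
  obtain ⟨n, hn⟩ := exists_isCompl_ker_range_pow_succ f
  rcases h.2 _ _ hn with hker | hrange
  · have hinj : Function.Injective f := by
      rw [LinearMap.ker_eq_bot, pow_succ] at hker
      exact .of_comp (f := ⇑(f ^ n)) hker
    exact .inr ⟨hinj, IsArtinian.surjective_of_injective_endomorphism f hinj⟩
  · exact .inl ⟨n, LinearMap.range_eq_bot.1 hrange⟩

end Indecomposable

theorem isInternal_range_symm_comp_single {A T ι : Type*} [Ring A] [AddCommGroup T] [Module A T]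
    [Finite ι] [DecidableEq ι] {X : ι → Type*} [∀ a, AddCommGroup (X a)] [∀ a, Module A (X a)]
    (e : T ≃ₗ[A] (∀ a, X a)) :
    DirectSum.IsInternal fun a =>
      LinearMap.range (e.symm.toLinearMap ∘ₗ LinearMap.single A X a) := by
  cases nonempty_fintype ι
  let i a := e.symm.toLinearMap ∘ₗ LinearMap.single A X a
  have hi : ∀ a, Function.Injective (i a) := fun a =>
    e.symm.injective.comp (Pi.single_injective a)
  let w a : X a ≃ₗ[A] LinearMap.range (i a) := LinearEquiv.ofInjective (i a) (hi a)
  let E : (DirectSum ι fun a => LinearMap.range (i a)) ≃ₗ[A] T :=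
    (DirectSum.linearEquivFunOnFintype A ι _).trans
      ((LinearEquiv.piCongrRight fun a => (w a).symm).trans e.symm)
  have hE : DirectSum.coeLinearMap (fun a => LinearMap.range (i a)) = E.toLinearMap := by
    refine DirectSum.linearMap_ext _ fun a => LinearMap.ext fun x => ?_
    obtain ⟨y, rfl⟩ := (w a).surjective x
    have hsingle : (LinearEquiv.piCongrRight fun a => (w a).symm) (Pi.single a (w a y)) =
        Pi.single a y :=
      funext fun b => by rcases eq_or_ne b a with rfl | hb <;> simp [*]
    simp [E, hsingle, DirectSum.linearEquivFunOnFintype_lof, w, i]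
  exact (congrArg (Function.Bijective ∘ DFunLike.coe) hE).mpr E.bijective

theorem isBasicMod_iff_nonempty_equiv_pi {A T : Type} [Ring A] [AddCommGroup T] [Module A T] :
    IsBasicMod A T ↔ ∃ (k : ℕ) (X : Fin k → ModuleCat.{0} A),
      Nonempty (T ≃ₗ[A] (∀ a, X a)) ∧ (∀ a, IsIndecomposableMod A (X a)) ∧
        ∀ a b, a ≠ b → IsEmpty (X a ≃ₗ[A] X b) := by
  constructor
  · rintro ⟨k, N, hN, hindec, hiso⟩
    exact ⟨k, fun a => ModuleCat.of A (N a),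
      ⟨(LinearEquiv.ofBijective (DirectSum.coeLinearMap N) hN).symm.trans
        (DirectSum.linearEquivFunOnFintype A (Fin k) fun a => N a)⟩, hindec, hiso⟩
  · rintro ⟨k, X, ⟨e⟩, hindec, hiso⟩
    let w a : X a ≃ₗ[A]
        LinearMap.range (e.symm.toLinearMap ∘ₗ LinearMap.single A (fun a => X a) a) :=
      LinearEquiv.ofInjective _
        (e.symm.injective.comp (Pi.single_injective (M := fun a => X a) a))
    exact ⟨k, _, isInternal_range_symm_comp_single e, fun a => (hindec a).of_equiv (w a),
      fun a b hab => ⟨fun f => (hiso a b hab).false ((w a).trans (f.trans (w b).symm))⟩⟩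

theorem PdLeOne.of_equiv_pi {A T ι : Type} [Ring A] [AddCommGroup T] [Module A T] {X : ι → Type}
    [∀ a, AddCommGroup (X a)] [∀ a, Module A (X a)] (e : T ≃ₗ[A] (∀ a, X a)) (h : PdLeOne A T)
    (a : ι) : PdLeOne A (X a) := by
  classical
  exact h.of_retract (e.symm.toLinearMap ∘ₗ LinearMap.single A X a)
    (LinearMap.proj a ∘ₗ e.toLinearMap) fun x => by simp

theorem finite_of_equiv_pi {A T ι : Type*} [Ring A] [AddCommGroup T] [Module A T]
    [Module.Finite A T] {X : ι → Type*} [∀ a, AddCommGroup (X a)] [∀ a, Module A (X a)]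
    (e : T ≃ₗ[A] (∀ a, X a)) (a : ι) : Module.Finite A (X a) :=
  .of_surjective (LinearMap.proj a ∘ₗ e.toLinearMap)
    ((Function.surjective_eval a).comp e.surjective)

namespace IsPresentationFaithful

variable {A B : Type} [Ring A] [Ring B] {q : A →+* B} (hq : IsPresentationFaithful q)
  {T X Z : Type} [AddCommGroup T] [Module A T] [AddCommGroup X] [Module A X]
  [AddCommGroup Z] [Module B Z]

include hq

theorem eq_zero_of_isIdempotentElem [Module.Finite A X] {f : Module.End A X}
    (hf : IsIdempotentElem f) (h : ∀ x, f x ∈ kerSMul q X) : f = 0 := by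
  have hrange : Subsingleton (LinearMap.range f) := by
    refine hq.subsingleton_of_kerSMul_eq_top (eq_top_iff.2 ?_)
    rintro ⟨_, y, rfl⟩ -
    convert map_mem_kerSMul f.rangeRestrict (h y) using 1
    exact Subtype.ext (LinearMap.congr_fun hf y).symm
  exact LinearMap.range_eq_bot.1 (Submodule.subsingleton_iff_eq_bot.1 hrange)

theorem isIndecomposableMod_reduction [IsArtinianRing A] [Module.Finite A X]
    (hpd : PdLeOne A X) {p : X →ₛₗ[q] Z} (hp : IsReduction p) (h : IsIndecomposableMod A X) :
    IsIndecomposableMod B Z := by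
  refine isIndecomposableMod_iff_isIdempotentElem.2 ⟨?_, fun e he => ?_⟩
  · by_contra hZ
    rw [not_nontrivial_iff_subsingleton] at hZ
    exact not_subsingleton_iff_nontrivial.2 h.1 (hq.subsingleton_of_kerSMul_eq_top
      (eq_top_iff.2 fun x _ => hp.ker_le x (Subsingleton.elim _ _)))
  · obtain ⟨f, hf⟩ := hq.exists_lift hpd p hp e
    rcases h.isNilpotent_or_bijective f with ⟨n, hn⟩ | hbij
    · refine .inl (LinearMap.ext fun z => ?_)
      obtain ⟨x, rfl⟩ := hp.surjective z
      rw [← apply_pow_succ_of_idempotent he hf n, hn, LinearMap.zero_apply, map_zero,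
        LinearMap.zero_apply]
    · refine .inr (LinearMap.ext fun z => ?_)
      obtain ⟨x, rfl⟩ := hp.surjective z
      obtain ⟨y, rfl⟩ := hbij.surjective x
      rw [hf, ← Module.End.mul_apply, he.eq, Module.End.one_apply]

variable [RingHomSurjective q]

theorem isIndecomposableMod_of_reduction [Module.Finite A X] {p : X →ₛₗ[q] Z} (hp : IsReduction p)
    (h : IsIndecomposableMod B Z) : IsIndecomposableMod A X := by
  rw [isIndecomposableMod_iff_isIdempotentElem] at h ⊢
  obtain ⟨_, h⟩ := h
  refine ⟨hp.surjective.nontrivial, fun f hf => ?_⟩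
  obtain ⟨e, he⟩ := hp.exists_map p f
  have hidem : IsIdempotentElem e := LinearMap.ext fun z => by
    obtain ⟨x, rfl⟩ := hp.surjective z
    rw [Module.End.mul_apply, he, he, ← Module.End.mul_apply, hf.eq]
  rcases h e hidem with rfl | rfl
  · exact .inl (hq.eq_zero_of_isIdempotentElem hf fun x => hp.ker_le _ (by simp [← he]))
  · refine .inr (sub_eq_zero.1 (hq.eq_zero_of_isIdempotentElem hf.one_sub fun x =>
      hp.ker_le _ ?_)).symm
    simp [← he]

variable [IsArtinianRing A]

theorem isBasicMod_reduction [Module.Finite A T] (hpd : PdLeOne A T) {p : T →ₛₗ[q] Z}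
    (hp : IsReduction p) (h : IsBasicMod A T) : IsBasicMod B Z := by
  rw [isBasicMod_iff_nonempty_equiv_pi] at h ⊢
  obtain ⟨k, X, ⟨e⟩, hindec, hiso⟩ := h
  have hpdX := hpd.of_equiv_pi e
  have := finite_of_equiv_pi e
  choose Y pY hY using fun a => exists_isReduction q (X a)
  refine ⟨k, Y, hp.nonempty_equiv (.pi hY) e,
    fun a => hq.isIndecomposableMod_reduction (hpdX a) (hY a) (hindec a),
    fun a b hab => ⟨fun w => ?_⟩⟩
  obtain ⟨v⟩ := hq.nonempty_equiv_of_reduction (hpdX a) (hpdX b) (hY a) (hY b) w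
  exact (hiso a b hab).false v

theorem exists_isBasicMod_lift [Module.Finite B Z] (hpd : PdLeOne B Z) (h : IsBasicMod B Z) :
    ∃ (T : ModuleCat.{0} A) (p : T →ₛₗ[q] Z),
      Module.Finite A T ∧ PdLeOne A T ∧ IsReduction p ∧ IsBasicMod A T := by
  obtain ⟨k, Y, ⟨e⟩, hindec, hiso⟩ := isBasicMod_iff_nonempty_equiv_pi.1 h
  have := finite_of_equiv_pi e
  choose X pX hX hpdX hpX using fun a => hq.exists_pdLeOne_lift (hpd.of_equiv_pi e a)
  refine ⟨ModuleCat.of A (∀ a, X a), e.symm.toLinearMap.comp (semilinearPi pX),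
    inferInstanceAs (Module.Finite A (∀ a, X a)), .pi hpdX,
    (IsReduction.pi hpX).equiv_comp e.symm, isBasicMod_iff_nonempty_equiv_pi.2
      ⟨k, X, ⟨.refl _ _⟩, fun a => hq.isIndecomposableMod_of_reduction (hpX a) (hindec a),
        fun a b hab => ⟨fun w => ?_⟩⟩⟩
  obtain ⟨v⟩ := (hpX a).nonempty_equiv (hpX b) w
  exact (hiso a b hab).false v

end IsPresentationFaithful

/-! ### Injective models -/

section Atoms

variable {A M X : Type*} [Ring A] [AddCommGroup M] [Module A M] [AddCommGroup X] [Module A X]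

theorem eq_bot_or_isAtom_map {N : Submodule A M} (hN : IsAtom N) (f : M →ₗ[A] X) :
    N.map f = ⊥ ∨ IsAtom (N.map f) := by
  refine or_iff_not_imp_left.2 fun hne => ⟨hne, fun P hP => ?_⟩
  have hlt : P.comap f ⊓ N < N := inf_lt_right.2 fun h =>
    hP.not_ge (Submodule.map_le_iff_le_comap.2 h)
  refine (Submodule.eq_bot_iff P).2 fun y hy => ?_
  obtain ⟨x, hx, rfl⟩ := hP.le hy
  have hx0 : x ∈ P.comap f ⊓ N := ⟨hy, hx⟩
  rw [hN.2 _ hlt, Submodule.mem_bot] at hx0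
  rw [hx0, map_zero]

theorem injective_domRestrict_of_isAtom {N : Submodule A M} (hN : IsAtom N) (f : M →ₗ[A] X) {a : M}
    (ha : a ∈ N) (hfa : f a ≠ 0) : Function.Injective (f.domRestrict N) := by
  have hlt : LinearMap.ker f ⊓ N < N := inf_lt_right.2 fun h => hfa (h ha)
  refine (injective_iff_map_eq_zero _).2 fun n hn => Subtype.ext ?_
  have hn' : (n : M) ∈ LinearMap.ker f ⊓ N := ⟨hn, n.2⟩
  rwa [hN.2 _ hlt] at hn'

end Atoms

/-- A decomposition `A ≅ ∏ p, U p` of the regular module together with finitely generated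
injectives `V p ⊇ U p` that controls the ideal `I = ker q`: `I V p` comes from `I U p`, a map
between the `V p` is injective or has image in `I V p`, and `core p ⊆ V p` is a submodule which
every injective map `V p → V p'` carries into `U p'` but not into `I V p'`. For a left Harada
algebra `V p` is `e_{i1}R`, `U p` is `rad^{j-1}(e_{i1}R) ≅ e_{ij}R`, and `core p` is
`rad^{n_i-1}(e_{i1}R)`. -/
structure InjectiveModel {A B : Type} [Ring A] [Ring B] (q : A →+* B) {J : Type} (V : J → Type)
    [∀ p, AddCommGroup (V p)] [∀ p, Module A (V p)] where
  summand : ∀ p, Submodule A (V p)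
  core : ∀ p, Submodule A (V p)
  equiv : A ≃ₗ[A] (∀ p, summand p)
  finite : ∀ p, Module.Finite A (V p)
  injective : ∀ p, Module.Injective A (V p)
  exists_mem_kerSMul_summand : ∀ p, ∀ x ∈ kerSMul q (V p),
    ∃ u ∈ kerSMul q (summand p), (u : V p) = x
  mem_kerSMul_or_injective : ∀ p p' (f : V p →ₗ[A] V p'),
    (∀ x, f x ∈ kerSMul q (V p')) ∨ Function.Injective f
  map_core_mem : ∀ p p' (f : V p →ₗ[A] V p'), Function.Injective f →
    ∀ x ∈ core p, f x ∈ summand p'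
  exists_map_core_notMem : ∀ p p' (f : V p →ₗ[A] V p'), Function.Injective f →
    ∃ x ∈ core p, f x ∉ kerSMul q (V p')
  le_summand_of_isAtom : ∀ p (N : Submodule A (V p)), IsAtom N → N ≤ summand p

namespace InjectiveModel

variable {A B : Type} [Ring A] [Ring B] {q : A →+* B} {J : Type} {V : J → Type}
  [∀ p, AddCommGroup (V p)] [∀ p, Module A (V p)] (D : InjectiveModel q V) {α β γ : Type}

/-- The embedding of the free module on `α` into the injective module `∏ V p`, the product being
over `α × J`. -/
def embed (α : Type) : (α → A) →ₗ[A] (∀ x : α × J, V x.2) :=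
  LinearMap.pi fun x => (D.summand x.2).subtype ∘ₗ LinearMap.proj x.2 ∘ₗ D.equiv.toLinearMap ∘ₗ
    LinearMap.proj x.1

include D

theorem embed_apply (a : α → A) (x : α × J) : D.embed α a x = D.equiv (a x.1) x.2 := rfl

theorem embed_injective (α : Type) : Function.Injective (D.embed α) := fun _ _ h =>
  funext fun i => D.equiv.injective (funext fun p => Subtype.ext (congrFun h (i, p)))

theorem exists_embed_eq {y : ∀ x : α × J, V x.2} (h : ∀ x, y x ∈ D.summand x.2) :
    ∃ a, D.embed α a = y :=
  ⟨fun i => D.equiv.symm fun p => ⟨y (i, p), h (i, p)⟩, funext fun x => by simp [embed_apply]⟩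

theorem mem_summand_of_mem_kerSMul {p : J} {x : V p} (hx : x ∈ kerSMul q (V p)) :
    x ∈ D.summand p := by
  obtain ⟨u, -, rfl⟩ := D.exists_mem_kerSMul_summand p x hx
  exact u.2

theorem exists_mem_kerSMul_embed_eq [Finite J] [Finite α] {y : ∀ x : α × J, V x.2}
    (h : y ∈ kerSMul q (∀ x : α × J, V x.2)) : ∃ a ∈ kerSMul q (α → A), D.embed α a = y := by
  choose u hu huy using fun x : α × J =>
    D.exists_mem_kerSMul_summand x.2 (y x) (map_mem_kerSMul (LinearMap.proj x) h)
  exact ⟨fun i => D.equiv.symm fun p => u (i, p), mem_kerSMul_pi fun i =>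
    map_mem_kerSMul D.equiv.symm.toLinearMap (mem_kerSMul_pi fun p => hu (i, p)),
    funext fun x => by simp [embed_apply, huy]⟩

theorem embed_mem_kerSMul_iff [Finite J] [Finite α] {a : α → A} :
    D.embed α a ∈ kerSMul q (∀ x : α × J, V x.2) ↔ a ∈ kerSMul q (α → A) := by
  refine ⟨fun h => ?_, map_mem_kerSMul (D.embed α)⟩
  obtain ⟨b, hb, hab⟩ := D.exists_mem_kerSMul_embed_eq h
  rwa [← D.embed_injective α hab]

theorem exists_map_embed_eq (φ : (α → A) →ₗ[A] (β → A)) :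
    ∃ ψ : (∀ x : α × J, V x.2) →ₗ[A] (∀ x : β × J, V x.2),
      ∀ a, ψ (D.embed α a) = D.embed β (φ a) := by
  have := D.injective
  exact Module.Injective.out (D.embed α) (D.embed_injective α) (D.embed β ∘ₗ φ)

theorem le_range_embed_of_isAtom {N : Submodule A (∀ x : α × J, V x.2)} (hN : IsAtom N) :
    N ≤ LinearMap.range (D.embed α) := by
  refine fun y hy => D.exists_embed_eq fun x => ?_
  have hyx : y x ∈ N.map (LinearMap.proj x) := ⟨y, hy, rfl⟩
  rcases eq_bot_or_isAtom_map hN (LinearMap.proj x) with hbot | hatom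
  · rw [hbot, Submodule.mem_bot] at hyx
    exact hyx ▸ zero_mem _
  · exact D.le_summand_of_isAtom _ _ hatom hyx

section Injective

variable [IsArtinianRing A] [Finite J] [Finite α]

/- The embedding is essential because it contains the socle, so an extension of an injective map
is injective, hence split. -/
theorem exists_map_embed_eq_of_injective (φ : (α → A) →ₗ[A] (β → A)) (hφ : Function.Injective φ) :
    ∃ (ψ : (∀ x : α × J, V x.2) →ₗ[A] (∀ x : β × J, V x.2))
      (ρ : (∀ x : β × J, V x.2) →ₗ[A] (∀ x : α × J, V x.2)),
      (∀ a, ψ (D.embed α a) = D.embed β (φ a)) ∧ Function.LeftInverse ρ ψ := by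
  have := D.finite
  have := D.injective
  obtain ⟨ψ, hψ⟩ := D.exists_map_embed_eq φ
  have hψinj : Function.Injective ψ := by
    refine LinearMap.ker_eq_bot.1 ((eq_bot_or_exists_atom_le _).resolve_right ?_)
    rintro ⟨N, hN, hker⟩
    refine hN.1 ((Submodule.eq_bot_iff N).2 fun y hy => ?_)
    obtain ⟨a, rfl⟩ := D.le_range_embed_of_isAtom hN hy
    have hφa : D.embed β (φ a) = 0 := by rw [← hψ, LinearMap.mem_ker.1 (hker hy)]
    rw [map_eq_zero_iff _ (D.embed_injective β), map_eq_zero_iff _ hφ] at hφa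
    rw [hφa, map_zero]
  obtain ⟨ρ, hρ⟩ := Module.Injective.out ψ hψinj LinearMap.id
  exact ⟨ψ, ρ, hψ, hρ⟩

theorem mem_kerSMul_of_injective [Finite β] (φ : (α → A) →ₗ[A] (β → A))
    (hφ : Function.Injective φ) {x : α → A} (hx : φ x ∈ kerSMul q (β → A)) :
    x ∈ kerSMul q (α → A) := by
  obtain ⟨ψ, ρ, hψ, hρ⟩ := D.exists_map_embed_eq_of_injective φ hφ
  have h := map_mem_kerSMul ρ (map_mem_kerSMul (D.embed β) hx)
  rwa [← hψ, hρ, embed_mem_kerSMul_iff] at h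

end Injective

/- The image of `u` is an injective hull of the atom `N`. -/
theorem exists_hull_of_isAtom {N : Submodule A (α → A)} (hN : IsAtom N) :
    ∃ (p : J) (c : V p) (u : V p →ₗ[A] (∀ x : α × J, V x.2)) (r : (∀ x : α × J, V x.2) →ₗ[A] V p),
      c ≠ 0 ∧ (∃ a ∈ N, u c = D.embed α a) ∧ r (u c) = c := by
  have := D.injective
  obtain ⟨a, haN, ha⟩ := Submodule.exists_mem_ne_zero_of_ne_bot hN.1
  obtain ⟨x, hx⟩ := Function.ne_iff.1 ((map_ne_zero_iff _ (D.embed_injective α)).2 ha)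
  let c := LinearMap.proj x ∘ₗ D.embed α
  obtain ⟨u, hu⟩ := Module.Injective.out (c.domRestrict N)
    (injective_domRestrict_of_isAtom hN c haN hx) (D.embed α ∘ₗ N.subtype)
  have hua : u (c a) = D.embed α a := hu ⟨a, haN⟩
  exact ⟨x.2, c a, u, LinearMap.proj x, hx, ⟨a, haN, hua⟩, congrFun hua x⟩

theorem mem_kerSMul_of_map_eq_zero {p p' : J} (f : V p →ₗ[A] V p') {c : V p} (hc : c ≠ 0)
    (hfc : f c = 0) (x : V p) : f x ∈ kerSMul q (V p') :=
  (D.mem_kerSMul_or_injective p p' f).resolve_right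
    (fun hf => hc ((map_eq_zero_iff f hf).1 hfc)) x

theorem injective_of_map_eq_self {p : J} (f : V p →ₗ[A] V p) {c : V p} (hc : c ≠ 0)
    (hfc : f c = c) : Function.Injective f := by
  refine (D.mem_kerSMul_or_injective p p f).resolve_left fun hf => ?_
  obtain ⟨v, -, hv⟩ := D.exists_map_core_notMem p p LinearMap.id Function.injective_id
  have hsub := D.mem_kerSMul_of_map_eq_zero (f - LinearMap.id) hc (by simp [hfc]) v
  exact hv (by simpa using sub_mem (hf v) hsub)

theorem exists_embed_eq_of_mem_core {p : J} (u : V p →ₗ[A] (∀ x : α × J, V x.2)) {l : V p}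
    (hl : l ∈ D.core p) : ∃ b, D.embed α b = u l := by
  refine D.exists_embed_eq fun x => ?_
  rcases D.mem_kerSMul_or_injective _ _ (LinearMap.proj x ∘ₗ u) with hmem | hinj
  · exact D.mem_summand_of_mem_kerSMul (hmem l)
  · exact D.map_core_mem _ _ _ hinj l hl

variable [Finite J]

/- If `φ` kills an atom, the core of the injective hull of that atom contains an element outside
`I` which `φ` maps into `I`. -/
theorem injective_of_mem_kerSMul [IsArtinianRing A] [Finite α] [Finite β]
    (φ : (α → A) →ₗ[A] (β → A)) (h : ∀ x, φ x ∈ kerSMul q (β → A) → x ∈ kerSMul q (α → A)) :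
    Function.Injective φ := by
  refine LinearMap.ker_eq_bot.1 ((eq_bot_or_exists_atom_le _).resolve_right ?_)
  rintro ⟨N, hN, hker⟩
  obtain ⟨ψ, hψ⟩ := D.exists_map_embed_eq φ
  obtain ⟨p, c, u, r, hc, ⟨a, haN, hua⟩, hruc⟩ := D.exists_hull_of_isAtom hN
  obtain ⟨l, hl, hrul⟩ := D.exists_map_core_notMem p p (r ∘ₗ u)
    (D.injective_of_map_eq_self (r ∘ₗ u) hc hruc)
  obtain ⟨b, hb⟩ := D.exists_embed_eq_of_mem_core u hl
  have hψuc : ψ (u c) = 0 := by rw [hua, hψ, LinearMap.mem_ker.1 (hker haN), map_zero]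
  have hφb : φ b ∈ kerSMul q (β → A) := by
    rw [← D.embed_mem_kerSMul_iff, ← hψ, hb]
    exact mem_kerSMul_pi fun x =>
      D.mem_kerSMul_of_map_eq_zero (LinearMap.proj x ∘ₗ ψ ∘ₗ u) hc (congrFun hψuc x) l
  apply hrul
  rw [LinearMap.comp_apply, ← hb]
  exact map_mem_kerSMul r (map_mem_kerSMul (D.embed α) (h b hφb))

theorem map_mem_kerSMul_of_embed [Finite α] [Finite γ]
    (δ : (∀ x : α × J, V x.2) →ₗ[A] (∀ x : γ × J, V x.2))
    (hδ : ∀ a, δ (D.embed α a) ∈ kerSMul q (∀ x : γ × J, V x.2)) (y : ∀ x : α × J, V x.2) :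
    δ y ∈ kerSMul q (∀ x : γ × J, V x.2) := by
  classical
  cases nonempty_fintype (α × J)
  rw [← Finset.univ_sum_single y, map_sum]
  refine Submodule.sum_mem _ fun x _ => mem_kerSMul_pi fun z => ?_
  let f : V x.2 →ₗ[A] V z.2 :=
    LinearMap.proj z ∘ₗ δ ∘ₗ LinearMap.single A (fun x : α × J => V x.2) x
  refine (D.mem_kerSMul_or_injective _ _ f).resolve_right (fun hf => ?_) (y x)
  obtain ⟨v, hv, hfv⟩ := D.exists_map_core_notMem _ _ f hf
  obtain ⟨a, ha⟩ := D.exists_embed_eq_of_mem_core (LinearMap.single A (fun x : α × J => V x.2) x) hv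
  have hmem := map_mem_kerSMul (LinearMap.proj z) (hδ a)
  rw [ha] at hmem
  exact hfv hmem

theorem exists_extension_of_mem_kerSMul [IsArtinianRing A] [Finite α] [Finite γ]
    (φ : (α → A) →ₗ[A] (β → A)) (θ : (α → A) →ₗ[A] (γ → A)) (hφ : Function.Injective φ)
    (hθ : ∀ x, θ x ∈ kerSMul q (γ → A)) :
    ∃ θ' : (β → A) →ₗ[A] (γ → A), (∀ x, θ' x ∈ kerSMul q (γ → A)) ∧ ∀ x, θ' (φ x) = θ x := by
  obtain ⟨ψ, ρ, hψ, hρ⟩ := D.exists_map_embed_eq_of_injective φ hφ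
  obtain ⟨δ, hδ⟩ := D.exists_map_embed_eq θ
  have hδI := D.map_mem_kerSMul_of_embed δ fun a => hδ a ▸ D.embed_mem_kerSMul_iff.2 (hθ a)
  obtain ⟨θ', hθ'⟩ := exists_factor_of_injective (D.embed γ) (D.embed_injective γ)
    (δ ∘ₗ ρ ∘ₗ D.embed β) fun b => by
      obtain ⟨a, -, ha⟩ := D.exists_mem_kerSMul_embed_eq (hδI (ρ (D.embed β b)))
      exact ⟨a, ha⟩
  refine ⟨θ', fun b => D.embed_mem_kerSMul_iff.1 ?_, fun x => D.embed_injective γ ?_⟩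
  · rw [hθ']
    exact hδI _
  · rw [hθ', LinearMap.comp_apply, LinearMap.comp_apply, ← hψ, hρ, hδ]

theorem isPresentationFaithful [IsArtinianRing A] (hker : RingHom.ker q ≤ Ring.jacobson A) :
    IsPresentationFaithful q where
  ker_le_jacobson := hker
  free_injective_iff φ :=
    ⟨fun hφ _ => D.mem_kerSMul_of_injective φ hφ, D.injective_of_mem_kerSMul φ⟩
  free_exists_extension := D.exists_extension_of_mem_kerSMul

end InjectiveModel

/-! ### Radical chains -/

section Radical

variable {A M X : Type} [Ring A] [AddCommGroup M] [Module A M] [AddCommGroup X] [Module A X]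

theorem radSub_eq_map_jacobson (N : Submodule A M) :
    radSub N = (Module.jacobson A N).map N.subtype := rfl

theorem radSub_le (N : Submodule A M) : radSub N ≤ N := Submodule.map_subtype_le _ _

theorem radSub_map {f : M →ₗ[A] X} (hf : Function.Injective f) (N : Submodule A M) :
    radSub (N.map f) = (radSub N).map f := by
  have h := Module.map_jacobson_of_bijective (Submodule.equivMapOfInjective f hf N).bijective
  rw [radSub_eq_map_jacobson, ← h, radSub_eq_map_jacobson, ← Submodule.map_comp,
    ← Submodule.map_comp]
  rfl

theorem radSub_iterate_map {f : M →ₗ[A] X} (hf : Function.Injective f) (k : ℕ)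
    (N : Submodule A M) : radSub^[k] (N.map f) = (radSub^[k] N).map f :=
  (Function.Semiconj.iterate_right (f := Submodule.map f) (fun N => (radSub_map hf N).symm) k
    N).symm

theorem radSub_iterate_eq_map_subtype (k : ℕ) (N : Submodule A M) :
    radSub^[k] N = (radSub^[k] (⊤ : Submodule A N)).map N.subtype := by
  rw [← radSub_iterate_map N.subtype_injective, Submodule.map_subtype_top]

theorem map_radSub_iterate_top_of_bijective (f : M →ₗ[A] X) (hf : Function.Bijective f) (k : ℕ) :
    (radSub^[k] (⊤ : Submodule A M)).map f = radSub^[k] ⊤ := by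
  rw [← radSub_iterate_map hf.1, Submodule.map_top, LinearMap.range_eq_top.2 hf.2]

theorem antitone_radSub_iterate (N : Submodule A M) : Antitone fun k => radSub^[k] N :=
  fun _ _ hkl => Function.antitone_iterate_of_le_id radSub_le hkl N

theorem radSub_lt [IsNoetherian A M] (N : Submodule A M) [Nontrivial N] : radSub N < N := by
  refine (radSub_le N).lt_of_ne fun heq => (Module.jacobson_lt_top A N).ne ?_
  apply Submodule.map_injective_of_injective N.subtype_injective
  rwa [Submodule.map_subtype_top]

theorem nonempty_radSub_equiv {N : Submodule A M} {N' : Submodule A X} (e : N ≃ₗ[A] N') :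
    Nonempty (radSub N ≃ₗ[A] radSub N') := by
  have h := radSub_iterate_eq_map_subtype 1 N'
  rw [← map_radSub_iterate_top_of_bijective e.toLinearMap e.bijective, ← Submodule.map_comp] at h
  rw [show radSub N' = _ from h, show radSub N = _ from radSub_iterate_eq_map_subtype 1 N]
  exact ⟨(Submodule.equivMapOfInjective _ N.subtype_injective _).symm.trans
    (Submodule.equivMapOfInjective (N'.subtype ∘ₗ e.toLinearMap)
      (N'.subtype_injective.comp e.injective) _)⟩

theorem bijective_of_injective_of_isIndecomposableMod [Module.Injective A M] [Nontrivial M]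
    (hX : IsIndecomposableMod A X) {f : M →ₗ[A] X} (hf : Function.Injective f) :
    Function.Bijective f := by
  obtain ⟨r, hr⟩ := Module.Injective.out f hf LinearMap.id
  have hidem : IsIdempotentElem (f ∘ₗ r : Module.End A X) :=
    LinearMap.ext fun x => congrArg f (hr (r x))
  refine ⟨hf, ?_⟩
  rcases (isIndecomposableMod_iff_isIdempotentElem.1 hX).2 _ hidem with hzero | hone
  · obtain ⟨x, hx⟩ := exists_ne (0 : M)
    refine absurd (hf ?_) hx
    simpa [hr] using LinearMap.congr_fun hzero (f x)
  · exact fun y => ⟨r y, LinearMap.congr_fun hone y⟩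

variable [IsArtinianRing A] [Module.Finite A M]

/- Lift `M → M ⧸ C`, for `C` maximal with `N ⊄ C`, to an endomorphism with image in `N`; it is
neither nilpotent nor, unless `N = M`, bijective. -/
theorem IsIndecomposableMod.le_jacobson_of_ne_top [Module.Projective A M]
    (h : IsIndecomposableMod A M) {N : Submodule A M} (hN : N ≠ ⊤) : N ≤ Module.jacobson A M := by
  refine le_sInf fun C hC => by_contra fun hle => ?_
  have hsup : C ⊔ N = ⊤ := hC.2 _ (left_lt_sup.2 hle)
  have hsurj : Function.Surjective (C.mkQ.domRestrict N) := by
    rw [← LinearMap.range_eq_top, LinearMap.range_domRestrict, Submodule.map_mkQ_eq_top, hsup]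
  obtain ⟨l, hl⟩ := exists_lift_of_projective (σ := RingHom.id A) _ hsurj C.mkQ
  let f : Module.End A M := N.subtype ∘ₗ l
  have hpow : ∀ n, C.mkQ ∘ₗ (f ^ n) = C.mkQ := by
    intro n
    induction n with
    | zero => rfl
    | succ n ih =>
      rw [pow_succ', Module.End.mul_eq_comp, ← LinearMap.comp_assoc,
        show C.mkQ ∘ₗ f = C.mkQ from LinearMap.ext hl, ih]
  rcases h.isNilpotent_or_bijective f with ⟨n, hn⟩ | hb
  · refine hC.1 ?_
    rw [← C.ker_mkQ, ← hpow (n + 1), hn, LinearMap.comp_zero, LinearMap.ker_zero]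
  · refine hN (eq_top_iff.2 fun x _ => ?_)
    obtain ⟨y, rfl⟩ := hb.2 x
    exact (l y).2

end Radical

/-- The first `n` radicals `V, rad V, …, rad^{n-1} V` of `V` are indecomposable projective. For a
left Harada algebra this holds for `V = e_{i1}R` and `n = n_i`. -/
def ProjectiveRadicalChain (A V : Type) [Ring A] [AddCommGroup V] [Module A V] (n : ℕ) : Prop :=
  ∀ j < n, Module.Projective A (radSub^[j] (⊤ : Submodule A V) : Submodule A V) ∧
    IsIndecomposableMod A (radSub^[j] (⊤ : Submodule A V) : Submodule A V)

namespace ProjectiveRadicalChain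

variable {A V W : Type} [Ring A] [AddCommGroup V] [Module A V] [AddCommGroup W] [Module A W]
  [IsArtinianRing A] [Module.Finite A V] {n : ℕ}

theorem radSub_iterate_succ_lt (h : ProjectiveRadicalChain A V n) {j : ℕ} (hj : j < n) :
    radSub^[j + 1] (⊤ : Submodule A V) < radSub^[j] ⊤ := by
  have := (h j hj).2.1
  rw [Function.iterate_succ_apply']
  exact radSub_lt _

theorem le_radSub_iterate_or_eq (h : ProjectiveRadicalChain A V n) (N : Submodule A V) {k : ℕ}
    (hk : k ≤ n) : N ≤ radSub^[k] ⊤ ∨ ∃ j < k, N = radSub^[j] ⊤ := by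
  induction k with
  | zero => exact Or.inl le_top
  | succ k ih =>
    rcases ih (by lia) with hle | ⟨j, hj, hN⟩
    · by_cases heq : N = radSub^[k] ⊤
      · exact Or.inr ⟨k, k.lt_succ_self, heq⟩
      · obtain ⟨hproj, hind⟩ := h k hk
        have hne : N.submoduleOf (radSub^[k] ⊤) ≠ ⊤ := fun htop =>
          heq (hle.antisymm (Submodule.submoduleOf_eq_top.1 htop))
        rw [Function.iterate_succ_apply']
        exact Or.inl fun x hx => ⟨⟨x, hle hx⟩, hind.le_jacobson_of_ne_top hne hx, rfl⟩
    · exact Or.inr ⟨j, hj.trans k.lt_succ_self, hN⟩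

theorem le_radSub_iterate_of_isAtom (h : ProjectiveRadicalChain A V n) {N : Submodule A V}
    (hN : IsAtom N) {k : ℕ} (hk : k < n) : N ≤ radSub^[k] ⊤ := by
  refine (h.le_radSub_iterate_or_eq N hk.le).resolve_right ?_
  rintro ⟨j, hj, rfl⟩
  have hbot := hN.2 _ (h.radSub_iterate_succ_lt (hj.trans hk))
  exact Submodule.nontrivial_iff_ne_bot.1 (h (j + 1) (by lia)).2.1 hbot

/- A map whose image is one of the projective submodules `rad^j V` splits. -/
theorem map_mem_radSub_iterate_or_injective {f : W →ₗ[A] V} (h : ProjectiveRadicalChain A V n)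
    (hW : IsIndecomposableMod A W) :
    (∀ x, f x ∈ radSub^[n] (⊤ : Submodule A V)) ∨ Function.Injective f := by
  rcases h.le_radSub_iterate_or_eq (LinearMap.range f) le_rfl with hle | ⟨j, hj, hrange⟩
  · exact Or.inl fun x => hle ⟨x, rfl⟩
  have : Module.Projective A (LinearMap.range f) := hrange ▸ (h j hj).1
  obtain ⟨s, hs⟩ := exists_lift_of_projective (σ := RingHom.id A) f.rangeRestrict
    f.surjective_rangeRestrict LinearMap.id
  have hidem : IsIdempotentElem (s ∘ₗ f.rangeRestrict : Module.End A W) :=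
    LinearMap.ext fun x => congrArg s (hs (f.rangeRestrict x))
  rcases (isIndecomposableMod_iff_isIdempotentElem.1 hW).2 _ hidem with hzero | hone
  · left
    intro x
    have hfx : f.rangeRestrict x = 0 := by
      rw [← LinearMap.id_apply (R := A) (f.rangeRestrict x), ← hs,
        show s (f.rangeRestrict x) = 0 from LinearMap.congr_fun hzero x, map_zero]
    rw [show f x = 0 from congrArg Subtype.val hfx]
    exact zero_mem _
  · have hleft : Function.LeftInverse s f.rangeRestrict := LinearMap.congr_fun hone
    exact Or.inr (f.injective_rangeRestrict_iff.1 hleft.injective)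

end ProjectiveRadicalChain

/-! ### Left Harada algebras -/

theorem mem_rightIdeal_iff_of_isIdempotentElem {R : Type} [Ring R] {e x : R}
    (he : IsIdempotentElem e) : x ∈ rightIdeal R e ↔ e * x = x := by
  rw [rightIdeal, Submodule.mem_span_singleton]
  constructor
  · rintro ⟨a, rfl⟩
    rw [mul_smul_comm, he]
  · exact fun h => ⟨op x, h⟩

theorem projective_mulOpposite (R : Type) [Ring R] : Module.Projective Rᵐᵒᵖ R :=
  Module.Projective.of_equiv' (opLinearEquiv Rᵐᵒᵖ : R ≃ₗ[Rᵐᵒᵖ] Rᵐᵒᵖ).symm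

theorem finite_mulOpposite (R : Type) [Ring R] : Module.Finite Rᵐᵒᵖ R :=
  Module.Finite.equiv (opLinearEquiv Rᵐᵒᵖ : R ≃ₗ[Rᵐᵒᵖ] Rᵐᵒᵖ).symm

namespace HaradaData

variable {R : Type} [Ring R] (H : HaradaData R)

/-- The index set of the idempotents `e_{ij}`. -/
abbrev Index : Type := Σ i : Fin H.m, Fin (H.n i)

/-- The indecomposable projective right module `e_{ij}R`, as a submodule of `R`. -/
abbrev summand (p : H.Index) : Submodule Rᵐᵒᵖ R := rightIdeal R (H.e p.1 p.2)

/-- The injective right module `e_{i1}R`, which contains a copy of `e_{ij}R` for every `j`. -/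
abbrev hull (i : Fin H.m) : Submodule Rᵐᵒᵖ R := H.summand ⟨i, ⟨0, H.hn i⟩⟩

/-- The copy `rad^{j-1}(e_{i1}R)` of `e_{ij}R` in `e_{i1}R`; the shift of `j` matches the exponent,
as the second component of an index starts at `0`. -/
abbrev copy (p : H.Index) : Submodule Rᵐᵒᵖ (H.hull p.1) := radSub^[p.2.val] ⊤

/-- The submodule `rad^{n_i-1}(e_{i1}R)`, the smallest of the copies of the `e_{ij}R`. -/
abbrev core (i : Fin H.m) : Submodule Rᵐᵒᵖ (H.hull i) := radSub^[H.n i - 1] ⊤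

variable {H} in
theorem mem_summand_iff {p : H.Index} {x : R} : x ∈ H.summand p ↔ H.e p.1 p.2 * x = x :=
  mem_rightIdeal_iff_of_isIdempotentElem (H.idem p.1 p.2)

theorem e_mul_mem_summand (p : H.Index) (x : R) : H.e p.1 p.2 * x ∈ H.summand p :=
  mem_summand_iff.2 (by rw [← mul_assoc, H.idem p.1 p.2])

variable {H} in
theorem e_mul_eq_zero {p p' : H.Index} (hp : p ≠ p') {x : R} (hx : x ∈ H.summand p') :
    H.e p.1 p.2 * x = 0 := by
  rw [← mem_summand_iff.1 hx, ← mul_assoc, H.orth p p' hp, zero_mul]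

/-- Left multiplication by `e_{ij}`, the projection of `R` onto its direct summand `e_{ij}R`. -/
def proj (p : H.Index) : R →ₗ[Rᵐᵒᵖ] H.summand p :=
  (LinearMap.mulLeft Rᵐᵒᵖ (H.e p.1 p.2)).codRestrict _ (H.e_mul_mem_summand p)

theorem proj_coe_self (p : H.Index) (x : H.summand p) : H.proj p x = x :=
  Subtype.ext (mem_summand_iff.1 x.2)

theorem projective_summand (p : H.Index) : Module.Projective Rᵐᵒᵖ (H.summand p) :=
  have := projective_mulOpposite R
  Module.Projective.of_split (H.summand p).subtype (H.proj p) (LinearMap.ext (H.proj_coe_self p))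

instance finite_summand (i : Fin H.m) (j : Fin (H.n i)) :
    Module.Finite Rᵐᵒᵖ (H.summand ⟨i, j⟩) :=
  have := finite_mulOpposite R
  Module.Finite.of_surjective (H.proj ⟨i, j⟩) fun x => ⟨x, H.proj_coe_self ⟨i, j⟩ x⟩

theorem pi_proj_bijective : Function.Bijective (LinearMap.pi H.proj) := by
  classical
  refine ⟨(injective_iff_map_eq_zero _).2 fun x hx => ?_, fun y => ⟨∑ p, (y p : R), ?_⟩⟩
  · rw [← one_mul x, ← H.sum_eq_one, Finset.sum_mul]
    exact Finset.sum_eq_zero fun p _ => congrArg Subtype.val (congrFun hx p)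
  · ext p : 1
    rw [LinearMap.pi_apply, map_sum, Finset.sum_eq_single p, H.proj_coe_self]
    · exact fun p' _ hp' => Subtype.ext (e_mul_eq_zero hp'.symm (y p').2)
    · exact fun hp => absurd (Finset.mem_univ p) hp

theorem nonempty_summand_equiv_copy (p : H.Index) :
    Nonempty (H.summand p ≃ₗ[Rᵐᵒᵖ] H.copy p) := by
  obtain ⟨i, j, hj⟩ := p
  induction j with
  | zero => exact ⟨Submodule.topEquiv.symm⟩
  | succ j ih =>
    obtain ⟨w⟩ := ih (j.lt_succ_self.trans hj)
    obtain ⟨v⟩ := H.rad_iso i ⟨j + 1, hj⟩ j.succ_pos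
    obtain ⟨u⟩ := nonempty_radSub_equiv w
    rw [copy, Function.iterate_succ_apply']
    exact ⟨v.trans u⟩

theorem projectiveRadicalChain_hull (i : Fin H.m) :
    ProjectiveRadicalChain Rᵐᵒᵖ (H.hull i) (H.n i) := by
  intro j hj
  obtain ⟨w⟩ := H.nonempty_summand_equiv_copy ⟨i, j, hj⟩
  have := H.projective_summand ⟨i, j, hj⟩
  exact ⟨Module.Projective.of_equiv' w, (H.indec i ⟨j, hj⟩).of_equiv w⟩

theorem eq_and_bijective_of_injective {i i' : Fin H.m} {f : H.hull i →ₗ[Rᵐᵒᵖ] H.hull i'}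
    (hf : Function.Injective f) : i = i' ∧ Function.Bijective f := by
  have := H.inj i
  have := (H.indec i ⟨0, H.hn i⟩).1
  have hb := bijective_of_injective_of_isIndecomposableMod (H.indec i' ⟨0, H.hn i'⟩) hf
  refine ⟨by_contra fun hne => ?_, hb⟩
  exact (H.basic _ _ fun h => hne (congrArg Sigma.fst h)).false (LinearEquiv.ofBijective f hb)

theorem map_mem_copy_of_injective {i : Fin H.m} (p : H.Index) {f : H.hull i →ₗ[Rᵐᵒᵖ] H.hull p.1}
    (hf : Function.Injective f) {x : H.hull i} (hx : x ∈ H.core i) :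
    f x ∈ H.copy p := by
  obtain ⟨rfl, hb⟩ := H.eq_and_bijective_of_injective hf
  have hfx : f x ∈ H.core p.1 := by
    rw [core, ← map_radSub_iterate_top_of_bijective f hb]
    exact Submodule.mem_map_of_mem hx
  exact antitone_radSub_iterate _ (Nat.le_sub_one_of_lt p.2.2) hfx

variable {H} in
theorem e_mul_mem_radSub_iterate {z : R} (hz : z ∈ H.I) (p : H.Index) :
    H.e p.1 p.2 * z ∈ radSub^[H.n p.1 - p.2.val] (H.summand p) := by
  suffices H.I ≤ (radSub^[H.n p.1 - p.2.val] (H.summand p)).comap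
    (LinearMap.mulLeft Rᵐᵒᵖ (H.e p.1 p.2)) from this hz
  refine iSup_le fun p' x hx => ?_
  have hxp' : x ∈ H.summand p' := antitone_radSub_iterate _ (Nat.zero_le _) hx
  rw [Submodule.mem_comap, LinearMap.mulLeft_apply]
  by_cases hp : p = p'
  · subst hp
    rwa [mem_summand_iff.1 hxp']
  · rw [e_mul_eq_zero hp hxp']
    exact zero_mem _

theorem I_le_jacobson : H.I ≤ Module.jacobson Rᵐᵒᵖ R := iSup_le fun p =>
  (antitone_radSub_iterate (H.summand p) (Nat.sub_pos_of_lt p.2.2)).trans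
    (Module.map_jacobson_le (H.summand p).subtype)

section Reduction

variable {H} {S : Type} [Ring S] {π : R →+* S} (hker : ∀ x : R, π x = 0 ↔ x ∈ H.I)

include hker

theorem op_eq_zero_iff_unop_mem_I {a : Rᵐᵒᵖ} : RingHom.op π a = 0 ↔ unop a ∈ H.I := by
  rw [← hker]
  exact op_eq_zero_iff _

theorem ker_op_le_jacobson : RingHom.ker (RingHom.op π) ≤ Ring.jacobson Rᵐᵒᵖ := fun a ha =>
  Module.map_jacobson_le (M₂ := Rᵐᵒᵖ) (opLinearEquiv Rᵐᵒᵖ).toLinearMap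
    ⟨unop a, H.I_le_jacobson ((op_eq_zero_iff_unop_mem_I hker).1 ha), rfl⟩

theorem kerSMul_summand (p : H.Index) :
    kerSMul (RingHom.op π) (H.summand p) = radSub^[H.n p.1 - p.2.val] ⊤ := by
  apply le_antisymm
  · refine kerSMul_le fun a x ha => ?_
    have hxa : (x : R) * unop a ∈ H.I := by
      rw [← hker, map_mul, (hker _).2 ((op_eq_zero_iff_unop_mem_I hker).1 ha), mul_zero]
    have hmem := e_mul_mem_radSub_iterate hxa p
    rw [← mul_assoc, mem_summand_iff.1 x.2, radSub_iterate_eq_map_subtype] at hmem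
    obtain ⟨y, hy, hyx⟩ := hmem
    rwa [← show y = a • x from Subtype.ext hyx]
  · intro x hx
    have hxI : (x : R) ∈ H.I := by
      refine Submodule.mem_iSup_of_mem p ?_
      rw [radSub_iterate_eq_map_subtype]
      exact ⟨x, hx, rfl⟩
    have hx1 : op (x : R) • H.proj p 1 = x := by
      rw [← map_smul, op_smul_eq_mul, one_mul, H.proj_coe_self]
    rw [← hx1]
    exact smul_mem_kerSMul ((op_eq_zero_iff_unop_mem_I hker (a := op (x : R))).2 hxI) _

theorem kerSMul_hull (i : Fin H.m) : kerSMul (RingHom.op π) (H.hull i) = radSub^[H.n i] ⊤ :=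
  kerSMul_summand hker ⟨i, ⟨0, H.hn i⟩⟩

theorem exists_mem_kerSMul_copy (p : H.Index) {x : H.hull p.1}
    (hx : x ∈ kerSMul (RingHom.op π) (H.hull p.1)) :
    ∃ u ∈ kerSMul (RingHom.op π) (H.copy p), (u : H.hull p.1) = x := by
  obtain ⟨w⟩ := H.nonempty_summand_equiv_copy p
  have hrad := map_radSub_iterate_top_of_bijective (X := H.copy p) w.toLinearMap w.bijective
    (H.n p.1 - p.2.val)
  rw [← kerSMul_summand hker] at hrad
  rw [kerSMul_hull hker, ← Nat.sub_add_cancel p.2.2.le, Function.iterate_add_apply,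
    radSub_iterate_eq_map_subtype, ← hrad] at hx
  obtain ⟨_, ⟨y, hy, rfl⟩, rfl⟩ := hx
  exact ⟨w y, map_mem_kerSMul (N := H.copy p) w.toLinearMap hy, rfl⟩

variable [IsArtinianRing Rᵐᵒᵖ]

theorem map_mem_kerSMul_or_injective (i i' : Fin H.m) (f : H.hull i →ₗ[Rᵐᵒᵖ] H.hull i') :
    (∀ x, f x ∈ kerSMul (RingHom.op π) (H.hull i')) ∨ Function.Injective f := by
  rw [kerSMul_hull hker]
  exact (H.projectiveRadicalChain_hull i').map_mem_radSub_iterate_or_injective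
    (H.indec i ⟨0, H.hn i⟩)

theorem exists_map_notMem_kerSMul {i i' : Fin H.m} {f : H.hull i →ₗ[Rᵐᵒᵖ] H.hull i'}
    (hf : Function.Injective f) :
    ∃ x ∈ H.core i, f x ∉ kerSMul (RingHom.op π) (H.hull i') := by
  obtain ⟨rfl, hb⟩ := H.eq_and_bijective_of_injective hf
  have hlt := (H.projectiveRadicalChain_hull i).radSub_iterate_succ_lt (Nat.sub_one_lt (H.hn i).ne')
  rw [← map_radSub_iterate_top_of_bijective f hb (H.n i - 1), Nat.sub_add_cancel (H.hn i),
    ← kerSMul_hull hker] at hlt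
  obtain ⟨_, ⟨x, hx, rfl⟩, hfx⟩ := SetLike.exists_of_lt hlt
  exact ⟨x, hx, hfx⟩

theorem nonempty_injectiveModel :
    Nonempty (InjectiveModel (RingHom.op π) fun p : H.Index => H.hull p.1) := by
  have w := fun p => (H.nonempty_summand_equiv_copy p).some
  exact ⟨{
    summand := H.copy
    core := fun p => H.core p.1
    equiv := ((opLinearEquiv Rᵐᵒᵖ : R ≃ₗ[Rᵐᵒᵖ] Rᵐᵒᵖ).symm.trans
      (LinearEquiv.ofBijective _ H.pi_proj_bijective)).trans (LinearEquiv.piCongrRight w)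
    finite := fun p => inferInstance
    injective := fun p => H.inj p.1
    exists_mem_kerSMul_summand := fun p _ => exists_mem_kerSMul_copy hker p
    mem_kerSMul_or_injective := fun p p' => map_mem_kerSMul_or_injective hker p.1 p'.1
    map_core_mem := fun _ p' _ hf _ hx => H.map_mem_copy_of_injective p' hf hx
    exists_map_core_notMem := fun _ _ _ => exists_map_notMem_kerSMul hker
    le_summand_of_isAtom := fun p _ hN =>
      (H.projectiveRadicalChain_hull p.1).le_radSub_iterate_of_isAtom hN p.2.2 }⟩

theorem isPresentationFaithful_op : IsPresentationFaithful (RingHom.op π) :=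
  (nonempty_injectiveModel hker).some.isPresentationFaithful (ker_op_le_jacobson hker)

end Reduction

end HaradaData

/-! ### The bijection on isomorphism classes -/

/- A relation that is total on both sides and compatible with the two equivalence relations in both
directions is the graph of a bijection between the quotients. -/
theorem exists_bijective_quotient {α β : Type*} {s : Setoid α} {t : Setoid β} (r : α → β → Prop)
    (left_total : ∀ a, ∃ b, r a b) (right_total : ∀ b, ∃ a, r a b)
    (rel_iff : ∀ {a a' b b'}, r a b → r a' b' → (a ≈ a' ↔ b ≈ b')) :
    ∃ Φ : Quotient s → Quotient t, Function.Bijective Φ ∧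
      ∀ a b, r a b → Φ (Quotient.mk s a) = Quotient.mk t b := by
  choose F hF using left_total
  refine ⟨Quotient.map F fun a a' => (rel_iff (hF a) (hF a')).1, ⟨?_, ?_⟩,
    fun a b hab => Quotient.sound ((rel_iff (hF a) hab).1 (Setoid.refl a))⟩
  · refine Quotient.ind₂ fun a a' h => ?_
    exact Quotient.sound ((rel_iff (hF a) (hF a')).2 (Quotient.exact h))
  · refine Quotient.ind fun b => ?_
    obtain ⟨a, hab⟩ := right_total b
    exact ⟨Quotient.mk s a, Quotient.sound ((rel_iff (hF a) hab).1 (Setoid.refl a))⟩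

section RightModules

variable {R S : Type} [Ring R] [Ring S]

theorem isTiltingRight_iff_isTilting {T : Type} [AddCommGroup T] [Module Rᵐᵒᵖ T] :
    IsTiltingRight R T ↔ IsTilting Rᵐᵒᵖ T := by
  let w : R ≃ₗ[Rᵐᵒᵖ] Rᵐᵒᵖ := opLinearEquiv Rᵐᵒᵖ
  constructor
  · rintro ⟨hfin, hpd, hext, T₀, T₁, f, g, hT₀, hT₁, hf, hg, hfg⟩
    exact ⟨hfin, hpd, hext, T₀, T₁, f ∘ₗ w.symm.toLinearMap, g, hT₀, hT₁, hf.comp w.symm.injective,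
      hg, (LinearMap.range_comp_of_range_eq_top f w.symm.range).trans hfg⟩
  · rintro ⟨hfin, hpd, hext, T₀, T₁, f, g, hT₀, hT₁, hf, hg, hfg⟩
    exact ⟨hfin, hpd, hext, T₀, T₁, f ∘ₗ w.toLinearMap, g, hT₀, hT₁, hf.comp w.injective,
      hg, (LinearMap.range_comp_of_range_eq_top f w.range).trans hfg⟩

theorem exists_isReduction_of_equiv_quotient {I : Submodule Rᵐᵒᵖ R} {π : R →+* S}
    (hI : ∀ x ∈ I, π x = 0) {T Z : Type} [AddCommGroup T] [Module Rᵐᵒᵖ T] [AddCommGroup Z]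
    [Module Sᵐᵒᵖ Z] (e : RestrictRight π Z ≃ₗ[Rᵐᵒᵖ] (T ⧸ smulSub I T)) :
    ∃ p : T →ₛₗ[RingHom.op π] Z, IsReduction p := by
  let f : T →ₗ[Rᵐᵒᵖ] RestrictRight π Z := e.symm.toLinearMap ∘ₗ (smulSub I T).mkQ
  let p : T →ₛₗ[RingHom.op π] Z :=
    { toFun := f, map_add' := map_add f, map_smul' := map_smul f }
  refine ⟨p, e.symm.surjective.comp (smulSub I T).mkQ_surjective, fun x hx => ?_⟩
  have hxT : x ∈ smulSub I T :=
    (Submodule.Quotient.mk_eq_zero _).1 ((map_eq_zero_iff e.symm e.symm.injective).1 hx)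
  refine Submodule.span_le.2 ?_ hxT
  rintro _ ⟨t, r, hr, rfl⟩
  exact smul_mem_kerSMul ((op_eq_zero_iff _).2 (hI r hr)) t

variable {π : R →+* S} [IsArtinianRing Rᵐᵒᵖ] [RingHomSurjective (RingHom.op π)]

theorem isTiltingRight_and_isBasicMod_reduction (hπ : IsPresentationFaithful (RingHom.op π))
    {T Z : Type} [AddCommGroup T] [Module Rᵐᵒᵖ T] [AddCommGroup Z] [Module Sᵐᵒᵖ Z]
    {p : T →ₛₗ[RingHom.op π] Z} (hp : IsReduction p)
    (h : IsTiltingRight R T ∧ IsBasicMod Rᵐᵒᵖ T) : IsTiltingRight S Z ∧ IsBasicMod Sᵐᵒᵖ Z := by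
  have := h.1.1
  exact ⟨isTiltingRight_iff_isTilting.2
    (hπ.isTilting_reduction hp (isTiltingRight_iff_isTilting.1 h.1)),
    hπ.isBasicMod_reduction h.1.2.1 hp h.2⟩

theorem exists_bijective_isoSetoid_tilting (hπ : IsPresentationFaithful (RingHom.op π)) :
    ∃ Φ : Quotient (isoSetoid Rᵐᵒᵖ fun M => IsTiltingRight R M ∧ IsBasicMod Rᵐᵒᵖ M) →
        Quotient (isoSetoid Sᵐᵒᵖ fun M => IsTiltingRight S M ∧ IsBasicMod Sᵐᵒᵖ M),
      Function.Bijective Φ ∧ ∀ T N, (∃ p : T.1 →ₛₗ[RingHom.op π] N.1, IsReduction p) →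
        Φ (Quotient.mk _ T) = Quotient.mk _ N := by
  refine exists_bijective_quotient _ (fun T => ?_) (fun N => ?_) ?_
  · obtain ⟨Z, p, hp⟩ := exists_isReduction (RingHom.op π) T.1
    exact ⟨⟨Z, isTiltingRight_and_isBasicMod_reduction hπ hp T.2⟩, p, hp⟩
  · obtain ⟨hN, hbasic⟩ := N.2
    have := hN.1
    obtain ⟨T, p, hfin, hpd, hp, hT⟩ := hπ.exists_isBasicMod_lift hN.2.1 hbasic
    have htilt := hπ.isTilting_of_reduction hpd hp (isTiltingRight_iff_isTilting.1 hN)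
    exact ⟨⟨T, isTiltingRight_iff_isTilting.2 htilt, hT⟩, p, hp⟩
  · rintro T T' N N' ⟨p, hp⟩ ⟨p', hp'⟩
    have := T.2.1.1
    have := T'.2.1.1
    exact ⟨fun ⟨e⟩ => hp.nonempty_equiv hp' e, fun ⟨e⟩ =>
      hπ.nonempty_equiv_of_reduction T.2.1.2.1 T'.2.1.2.1 hp hp' e⟩

end RightModules

theorem statement18_general (R : Type) [Ring R] [IsArtinianRing Rᵐᵒᵖ] (H : HaradaData R)
    (S : Type) [Ring S] (π : R →+* S) (hsurj : Function.Surjective π)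
    (hker : ∀ x : R, π x = 0 ↔ x ∈ H.I) :
    (∀ (T : Type) [AddCommGroup T] [Module Rᵐᵒᵖ T],
      IsTiltingRight R T → IsBasicMod Rᵐᵒᵖ T →
      ∀ FT : ModuleCat.{0} Sᵐᵒᵖ,
        Nonempty (RestrictRight π ↥FT ≃ₗ[Rᵐᵒᵖ] (T ⧸ smulSub H.I T)) →
        IsTiltingRight S ↥FT ∧ IsBasicMod Sᵐᵒᵖ ↥FT) ∧
    ∃ Φ : Quotient (isoSetoid Rᵐᵒᵖ
            fun M => IsTiltingRight R ↥M ∧ IsBasicMod Rᵐᵒᵖ ↥M) →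
          Quotient (isoSetoid Sᵐᵒᵖ
            fun M => IsTiltingRight S ↥M ∧ IsBasicMod Sᵐᵒᵖ ↥M),
      Function.Bijective Φ ∧
      ∀ (T : {M : ModuleCat.{0} Rᵐᵒᵖ // IsTiltingRight R ↥M ∧ IsBasicMod Rᵐᵒᵖ ↥M})
        (N : {M : ModuleCat.{0} Sᵐᵒᵖ // IsTiltingRight S ↥M ∧ IsBasicMod Sᵐᵒᵖ ↥M}),
        Nonempty (RestrictRight π ↥N.1 ≃ₗ[Rᵐᵒᵖ] (↥T.1 ⧸ smulSub H.I ↥T.1)) →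
        Φ (Quotient.mk _ T) = Quotient.mk _ N := by
  have hI : ∀ x ∈ H.I, π x = 0 := fun x => (hker x).2
  have : RingHomSurjective (RingHom.op π) := ⟨op_surjective.comp (hsurj.comp unop_surjective)⟩
  have hπ := HaradaData.isPresentationFaithful_op hker
  constructor
  · rintro T _ _ hT hbasic FT ⟨e⟩
    obtain ⟨p, hp⟩ := exists_isReduction_of_equiv_quotient hI e
    exact isTiltingRight_and_isBasicMod_reduction hπ hp ⟨hT, hbasic⟩
  · obtain ⟨Φ, hΦ, hΦmk⟩ := exists_bijective_isoSetoid_tilting hπ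
    exact ⟨Φ, hΦ, fun T N ⟨e⟩ => hΦmk T N (exists_isReduction_of_equiv_quotient hI e)⟩

/-- Theorem 4.6.  With `R̄ = R/I` (presented by a surjective ring
homomorphism `π : R → S` with kernel `I`) and `F T = T ⊗_R R̄ = T/T·I`: for every basic
tilting right `R`-module `T`, `F T` is a basic tilting right `S`-module, and `T ↦ F T`
induces a bijection between the sets of isomorphism classes of basic tilting right
`R`-modules and of basic tilting right `S`-modules. -/
theorem statement18 (K R : Type) [Field K] [IsAlgClosed K] [Ring R] [Algebra K R]
    [FiniteDimensional K R] (H : HaradaData R)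
    (S : Type) [Ring S] (π : R →+* S) (hsurj : Function.Surjective π)
    (hker : ∀ x : R, π x = 0 ↔ x ∈ H.I) :
    (∀ (T : Type) [AddCommGroup T] [Module Rᵐᵒᵖ T],
      IsTiltingRight R T → IsBasicMod Rᵐᵒᵖ T →
      ∀ FT : ModuleCat.{0} Sᵐᵒᵖ,
        Nonempty (RestrictRight π ↥FT ≃ₗ[Rᵐᵒᵖ] (T ⧸ smulSub H.I T)) →
        IsTiltingRight S ↥FT ∧ IsBasicMod Sᵐᵒᵖ ↥FT) ∧
    ∃ Φ : Quotient (isoSetoid Rᵐᵒᵖ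
            fun M => IsTiltingRight R ↥M ∧ IsBasicMod Rᵐᵒᵖ ↥M) →
          Quotient (isoSetoid Sᵐᵒᵖ
            fun M => IsTiltingRight S ↥M ∧ IsBasicMod Sᵐᵒᵖ ↥M),
      Function.Bijective Φ ∧
      ∀ (T : {M : ModuleCat.{0} Rᵐᵒᵖ // IsTiltingRight R ↥M ∧ IsBasicMod Rᵐᵒᵖ ↥M})
        (N : {M : ModuleCat.{0} Sᵐᵒᵖ // IsTiltingRight S ↥M ∧ IsBasicMod Sᵐᵒᵖ ↥M}),
        Nonempty (RestrictRight π ↥N.1 ≃ₗ[Rᵐᵒᵖ] (↥T.1 ⧸ smulSub H.I ↥T.1)) →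
        Φ (Quotient.mk _ T) = Quotient.mk _ N := by
  have : Module.Finite K Rᵐᵒᵖ := Module.Finite.equiv (opLinearEquiv K : R ≃ₗ[K] Rᵐᵒᵖ)
  have : IsArtinianRing Rᵐᵒᵖ := isArtinian_of_tower K inferInstance
  exact statement18_general R H S π hsurj hker
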